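/- arXiv:1610.05406 — 2 statements merged into one kernel-verified Lean document; each statement's English description precedes it below -/
import Mathlib

section
/- Every finite simple 2-degenerate graph G with maximum degree Δ satisfies χ'_s(G) ≤ 5Δ + 1. -/
open scoped Classical

namespace StrongEC

/-- Two edges of `G` conflict for strong edge-coloring: they are distinct and either share
an endpoint or are both adjacent to a common edge of `G`. -/
def Conflict {V : Type*} (G : SimpleGraph V) (e e' : Sym2 V) : Prop :=
  e ≠ e' ∧ ((∃ v, v ∈ e ∧ v ∈ e') ∨
    ∃ f ∈ G.edgeSet, (∃ v, v ∈ e ∧ v ∈ f) ∧ (∃ w, w ∈ e' ∧ w ∈ f))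

/-- `C` is a strong edge-coloring of `G` with `k` colors. -/
def IsStrongColoring {V : Type*} (G : SimpleGraph V) {k : ℕ} (C : Sym2 V → Fin k) : Prop :=
  ∀ e ∈ G.edgeSet, ∀ e' ∈ G.edgeSet, Conflict G e e' → C e ≠ C e'

/-- `G` admits a strong `k`-edge-coloring. -/
def HasStrongColoring {V : Type*} (G : SimpleGraph V) (k : ℕ) : Prop :=
  ∃ C : Sym2 V → Fin k, IsStrongColoring G C

/-- The strong chromatic index of `G`: the least `k` such that `G` admits a strong
`k`-edge-coloring. -/
noncomputable def strongChromaticIndex {V : Type*} (G : SimpleGraph V) : ℕ :=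
  sInf {k | HasStrongColoring G k}

/-- `G` is 2-degenerate: every induced subgraph on a nonempty vertex set has a vertex of
degree at most 2 in it. -/
def TwoDegenerate {V : Type*} (G : SimpleGraph V) : Prop :=
  ∀ A : Finset V, A.Nonempty → ∃ v ∈ A, (G.neighborSet v ∩ ↑A).ncard ≤ 2

/-! Orient every edge from the vertex that comes later in a 2-degenerate order (the child) to the
earlier one (the parent), so that every vertex has at most two parents. Process the vertices in
this order, reserving for each processed vertex `q` a set `R q` of colors, two more than `q` has
children, from which the edges between `q` and its children are colored. An edge receives its color
as soon as all the parents of its child are processed. When `x` is processed, a child `y` of `x`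
whose parents are now all processed gets two colors. If it has another parent `q`, the edge `yq`
takes an unused color of `R q` that avoids the at most two edges from `x` to its parents: this is
what the two spare colors of `R q` are for. The edge `yx` and the remaining colors of `R x` are then
chosen greedily. If `x` has `m ≤ 2` parents and `n ≤ Δ - m` children, the color of `yx` has to avoid
at most `m(Δ + 2)` colors at the parents of `x`, `Δ + 2` at `q` (one of them that of `yq`),
`n - 1` of the other edges between children of `x` and their second parents, and `n - 1` of the
other edges between `x` and its children; these add up to at most `5Δ`. -/

section Choice

theorem exists_injOn_mem_of_card_le {ι κ : Type*} [Nonempty κ] (s : Finset ι) (L : ι → Finset κ)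
    (hL : ∀ i ∈ s, s.card ≤ (L i).card) :
    ∃ f : ι → κ, Set.InjOn f s ∧ ∀ i ∈ s, f i ∈ L i := by
  have hall (t : Finset s) : t.card ≤ (t.biUnion fun i => L i).card := by
    obtain rfl | ⟨i, hi⟩ := t.eq_empty_or_nonempty
    · simp
    calc t.card ≤ s.card := by simpa using t.card_le_univ
      _ ≤ (L i).card := hL i i.2
      _ ≤ _ := Finset.card_le_card (Finset.subset_biUnion_of_mem (fun j : s => L j) hi)
  obtain ⟨f, hf, hfL⟩ :=
    (Finset.all_card_le_biUnion_card_iff_exists_injective fun i : s => L i).1 hall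
  refine ⟨fun i => if hi : i ∈ s then f ⟨i, hi⟩ else Classical.arbitrary κ, ?_, ?_⟩
  · intro i hi j hj hij
    rw [Finset.mem_coe] at hi hj
    simp only [hi, hj, dif_pos] at hij
    exact congrArg Subtype.val (hf hij)
  · intro i hi
    simpa only [hi, dif_pos] using hfL ⟨i, hi⟩

theorem exists_sym2_eq_of_asymm {V κ : Type*} [Nonempty κ] {P : V → V → Prop}
    (hP : ∀ a b, P a b → ¬ P b a) (c : V → V → κ) :
    ∃ C : Sym2 V → κ, ∀ a b, P a b → C s(a, b) = c a b := by
  let F (a b : V) : κ := if P a b then c a b else if P b a then c b a else Classical.arbitrary κ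
  have hF (a b : V) : F a b = F b a := by
    have := hP a b
    grind
  exact ⟨Sym2.lift ⟨F, hF⟩, fun a b hab => by simp [F, hab]⟩

end Choice

section Orientation

/-- The parents of `x` in a relation `P`, where `P x p` is read as "`p` is a parent of `x`". -/
noncomputable def parents {V : Type*} [Fintype V] (P : V → V → Prop) (x : V) : Finset V :=
  {p | P x p}

/-- The children of `q` in a relation `P`, where `P y q` is read as "`y` is a child of `q`". -/
noncomputable def children {V : Type*} [Fintype V] (P : V → V → Prop) (q : V) : Finset V :=
  {y | P y q}

/-- `P` is an acyclic orientation of `G`, each edge pointing from a child to its parent. -/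
structure IsAcyclicOrientation {V : Type*} (G : SimpleGraph V) (P : V → V → Prop) : Prop where
  adj_iff : ∀ a b, G.Adj a b ↔ P a b ∨ P b a
  wellFounded : WellFounded fun p x => P x p

variable {V : Type*} {G : SimpleGraph V}

theorem IsAcyclicOrientation.asymm {P : V → V → Prop} (hP : IsAcyclicOrientation G P) (a b : V)
    (hab : P a b) : ¬ P b a :=
  hP.wellFounded.asymmetric _ _ hab

theorem exists_rank_of_degenerate {d : ℕ}
    (hd : ∀ A : Finset V, A.Nonempty → ∃ v ∈ A, (G.neighborSet v ∩ ↑A).ncard ≤ d)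
    (A : Finset V) :
    ∃ f : V → ℕ, Set.InjOn f A ∧ ∀ v ∈ A, {p ∈ A | G.Adj v p ∧ f p < f v}.card ≤ d := by
  induction A using Finset.strongInduction with
  | H A ih =>
    obtain rfl | hA := A.eq_empty_or_nonempty
    · exact ⟨fun _ => 0, by simp, by simp⟩
    obtain ⟨v, hvA, hv⟩ := hd A hA
    obtain ⟨f, hf, hfd⟩ := ih (A.erase v) (Finset.erase_ssubset hvA)
    let n := (A.erase v).sup f + 1
    have hlt : ∀ u ∈ A, u ≠ v → f u < n := fun u hu huv =>
      Nat.lt_succ_of_le (Finset.le_sup (Finset.mem_erase.2 ⟨huv, hu⟩))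
    refine ⟨Function.update f v n, ?_, fun u hu => ?_⟩
    · intro a ha b hb hab
      rw [Finset.mem_coe] at ha hb
      have h_inj : a ≠ v → b ≠ v → f a = f b → a = b := fun hav hbv h =>
        hf (by simp [ha, hav]) (by simp [hb, hbv]) h
      have := hlt a ha
      have := hlt b hb
      grind [Function.update_apply]
    by_cases huv : u = v
    · subst huv
      refine le_trans ?_ hv
      rw [← Set.ncard_coe_finset]
      refine Set.ncard_le_ncard ?_ (A.finite_toSet.inter_of_right _)
      intro p hp
      have hp := Finset.mem_filter.1 (Finset.mem_coe.1 hp)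
      exact ⟨hp.2.1, hp.1⟩
    · refine (Finset.card_le_card ?_).trans (hfd u (Finset.mem_erase.2 ⟨huv, hu⟩))
      intro p hp
      have := hlt u hu huv
      grind [Function.update_apply]

variable [Fintype V]

@[simp]
theorem mem_parents {P : V → V → Prop} {x p : V} : p ∈ parents P x ↔ P x p := by
  simp [parents]

@[simp]
theorem mem_children {P : V → V → Prop} {q y : V} : y ∈ children P q ↔ P y q := by
  simp [children]

theorem exists_isAcyclicOrientation_of_degenerate {d : ℕ}
    (hd : ∀ A : Finset V, A.Nonempty → ∃ v ∈ A, (G.neighborSet v ∩ ↑A).ncard ≤ d) :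
    ∃ P, IsAcyclicOrientation G P ∧ ∀ x, (parents P x).card ≤ d := by
  obtain ⟨f, hf, hfd⟩ := exists_rank_of_degenerate hd Finset.univ
  refine ⟨fun x p => G.Adj x p ∧ f p < f x, ⟨fun a b => ?_, ?_⟩, fun x => ?_⟩
  · refine ⟨fun hab => ?_, fun h => h.elim And.left fun h => h.1.symm⟩
    have hne : f a ≠ f b := fun h => hab.ne (hf (by simp) (by simp) h)
    exact hne.lt_or_gt.symm.imp (⟨hab, ·⟩) (⟨hab.symm, ·⟩)
  · exact Subrelation.wf And.right (measure f).wf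
  · simpa only [parents] using hfd x (Finset.mem_univ x)

theorem IsAcyclicOrientation.card_children_add_card_parents {P : V → V → Prop}
    (hP : IsAcyclicOrientation G P) (x : V) :
    (children P x).card + (parents P x).card = G.degree x := by
  have hdisj : Disjoint (children P x) (parents P x) :=
    Finset.disjoint_left.2 fun y hy hy' => hP.asymm _ _ (mem_children.1 hy) (mem_parents.1 hy')
  rw [← Finset.card_union_of_disjoint hdisj, ← G.card_neighborFinset_eq_degree]
  congr 1
  ext y
  simp [hP.adj_iff, or_comm]

end Orientation

section ReservingColoring

variable {V κ : Type*} [Fintype V]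

/-- The children of `q` that have a parent outside `A`. -/
noncomputable def pendingChildren (P : V → V → Prop) (A : Finset V) (q : V) : Finset V :=
  {y ∈ children P q | ¬ parents P y ⊆ A}

/-- The children of `q` all of whose parents are in `A`. -/
noncomputable def completedChildren (P : V → V → Prop) (A : Finset V) (q : V) : Finset V :=
  {y ∈ children P q | parents P y ⊆ A}

/-- The colors at `p`: the reserved ones and those of the edges to the parents of `p`. -/
noncomputable def starColors (P : V → V → Prop) (c : V → V → κ) (R : V → Finset κ) (p : V) :
    Finset κ :=
  R p ∪ (parents P p).image (c p)

/-- The state of the greedy coloring once the vertices of `A` are processed: `c y q` is the color of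
the edge from a child `y` to its parent `q`, which is meaningful only when all parents of `y` are in
`A`, and `R q` is the set of colors reserved for the edges between `q` and its children. -/
structure IsReservingColoring (P : V → V → Prop) (A : Finset V) (c : V → V → κ)
    (R : V → Finset κ) : Prop where
  parents_subset : ∀ x ∈ A, parents P x ⊆ A
  card_reserved : ∀ q ∈ A, (R q).card = (children P q).card + 2
  color_mem : ∀ q, ∀ y ∈ completedChildren P A q, c y q ∈ R q
  color_injOn : ∀ q, Set.InjOn (c · q) (completedChildren P A q)
  reserved_disjoint : ∀ x ∈ A, ∀ p, P x p → Disjoint (R x) (starColors P c R p)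
  color_notMem : ∀ q, ∀ y ∈ completedChildren P A q, ∀ q', P y q' → q ≠ q' →
    c y q' ∉ starColors P c R q

variable {P : V → V → Prop} {A : Finset V} {c : V → V → κ} {R : V → Finset κ} {D : ℕ} {q x y : V}

@[simp]
theorem mem_pendingChildren : y ∈ pendingChildren P A q ↔ P y q ∧ ¬ parents P y ⊆ A := by
  simp [pendingChildren]

@[simp]
theorem mem_completedChildren : y ∈ completedChildren P A q ↔ P y q ∧ parents P y ⊆ A := by
  simp [completedChildren]

theorem completedChildren_subset_children : completedChildren P A q ⊆ children P q :=
  Finset.filter_subset _ _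

theorem card_completedChildren_add_card_pendingChildren :
    (completedChildren P A q).card + (pendingChildren P A q).card = (children P q).card :=
  Finset.card_filter_add_card_filter_not _

theorem card_starColors_le (hq : (R q).card = (children P q).card + 2)
    (hD : (children P q).card + (parents P q).card ≤ D) :
    (starColors P c R q).card ≤ D + 2 := by
  have hunion := Finset.card_union_le (R q) ((parents P q).image (c q))
  have himage : ((parents P q).image (c q)).card ≤ (parents P q).card := Finset.card_image_le
  unfold starColors
  omega

@[simp]
theorem mem_starColors {p : V} {k : κ} :
    k ∈ starColors P c R p ↔ k ∈ R p ∨ ∃ s, P p s ∧ c p s = k := by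
  simp [starColors]

@[simp]
theorem completedChildren_empty : completedChildren P ∅ q = ∅ := by
  refine Finset.eq_empty_of_forall_notMem fun y hy => ?_
  obtain ⟨hq, hy⟩ := mem_completedChildren.1 hy
  exact Finset.notMem_empty q (hy (mem_parents.2 hq))

theorem IsReservingColoring.empty : IsReservingColoring P ∅ c R where
  parents_subset := by simp
  card_reserved := by simp
  color_mem := by simp
  color_injOn := by simp
  reserved_disjoint := by simp
  color_notMem := by simp

end ReservingColoring

section Extension

variable {V κ : Type*} [Fintype V]

/-- The colors reserved for the children of `q` that are neither used at `q` yet nor in `T`. -/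
noncomputable def freeColors (P : V → V → Prop) (A : Finset V) (c : V → V → κ) (R : V → Finset κ)
    (T : Finset κ) (q : V) : Finset κ :=
  R q \ ((completedChildren P A q).image (c · q) ∪ T)

/-- The colors at the parents of `x`. -/
noncomputable def parentStarColors (P : V → V → Prop) (c : V → V → κ) (R : V → Finset κ) (x : V) :
    Finset κ :=
  (parents P x).biUnion (starColors P c R)

/-- The colors that `g` gives to the edges from the vertices of `s`, which are children of `x`, to
their parents other than `x`. -/
noncomputable def sideColors (P : V → V → Prop) (g : V → V → κ) (x : V) (s : Finset V) : Finset κ :=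
  s.biUnion fun y => ((parents P y).erase x).image (g y)

/-- The colors that the edge to `x` from a child `y` of `x` completed by `x` has to avoid, apart
from those of the other edges between `x` and its children. -/
noncomputable def forbiddenColors (P : V → V → Prop) (A : Finset V) (c : V → V → κ)
    (R : V → Finset κ) (g : V → V → κ) (x y : V) : Finset κ :=
  parentStarColors P c R x ∪ sideColors P g x ((completedChildren P (insert x A) x).erase y) ∪
    ((parents P y).erase x).biUnion (starColors P c R)

/-- The data that extend a coloring when `x` is processed: for a child `y` of `x` completed by `x`,
`h y` is the color of the edge from `y` to `x` and `g y q` that of the edge from `y` to its other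
parent `q`, and `S` is the set of colors reserved for the children of `x`. -/
structure IsExtension (P : V → V → Prop) (A : Finset V) (c : V → V → κ) (R : V → Finset κ) (x : V)
    (g : V → V → κ) (h : V → κ) (S : Finset κ) : Prop where
  card_reserved : S.card = (children P x).card + 2
  reserved_disjoint : ∀ p, P x p → Disjoint S (starColors P c R p)
  color_mem : ∀ y ∈ completedChildren P (insert x A) x, h y ∈ S
  color_injOn : Set.InjOn h (completedChildren P (insert x A) x)
  color_notMem : ∀ y ∈ completedChildren P (insert x A) x, ∀ q, P y q → q ≠ x →
    h y ∉ starColors P c R q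
  side_mem : ∀ y ∈ completedChildren P (insert x A) x, ∀ q, P y q → q ≠ x →
    g y q ∈ freeColors P A c R ((parents P x).image (c x)) q
  side_injOn : ∀ q ∈ A, Set.InjOn (g · q) {y ∈ completedChildren P (insert x A) x | P y q}
  side_notMem : ∀ y ∈ completedChildren P (insert x A) x, ∀ q, P y q → q ≠ x → g y q ∉ S

/-- The coloring `c` with the edges from the children of `x` completed by `x` recolored: by `h` if
they lead to `x` and by `g` otherwise. -/
noncomputable def extendColoring (P : V → V → Prop) (A : Finset V) (c : V → V → κ) (x : V)
    (g : V → V → κ) (h : V → κ) : V → V → κ :=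
  (completedChildren P (insert x A) x).piecewise (fun y => Function.update (g y) x (h y)) c

variable {P : V → V → Prop} {A : Finset V} {c : V → V → κ} {R : V → Finset κ} {D : ℕ}
  {g : V → V → κ} {q x y : V}

@[simp]
theorem mem_sideColors {s : Finset V} {k : κ} :
    k ∈ sideColors P g x s ↔ ∃ y ∈ s, ∃ q, P y q ∧ q ≠ x ∧ g y q = k := by
  simp only [sideColors, Finset.mem_biUnion, Finset.mem_image, Finset.mem_erase, mem_parents]
  grind

theorem mem_of_mem_completedChildren_insert (hy : y ∈ completedChildren P (insert x A) x)
    (hq : P y q) (hqx : q ≠ x) : q ∈ A :=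
  Finset.mem_of_mem_insert_of_ne ((mem_completedChildren.1 hy).2 (mem_parents.2 hq)) hqx

theorem mem_pendingChildren_of_completed_insert (hx : x ∉ A)
    (hy : y ∈ completedChildren P (insert x A) x) (hq : P y q) : y ∈ pendingChildren P A q :=
  mem_pendingChildren.2 ⟨hq, fun h => hx (h (mem_parents.2 (mem_completedChildren.1 hy).1))⟩

theorem IsReservingColoring.notMem_completedChildren_of_mem (hI : IsReservingColoring P A c R)
    (hx : x ∉ A) (hy : y ∈ A) (B : Finset V) : y ∉ completedChildren P B x := fun h =>
  hx (hI.parents_subset y hy (mem_parents.2 (mem_completedChildren.1 h).1))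

theorem mem_completedChildren_of_insert (hy : y ∈ completedChildren P (insert x A) q)
    (hyx : y ∉ completedChildren P (insert x A) x) : y ∈ completedChildren P A q := by
  obtain ⟨hq, hyA⟩ := mem_completedChildren.1 hy
  refine mem_completedChildren.2 ⟨hq, fun p hp => ?_⟩
  refine Finset.mem_of_mem_insert_of_ne (hyA hp) ?_
  rintro rfl
  exact hyx (mem_completedChildren.2 ⟨mem_parents.1 hp, hyA⟩)

theorem IsReservingColoring.exists_side_colors [Nonempty κ] (hI : IsReservingColoring P A c R)
    {T : Finset κ} (hT : T.card ≤ 2) :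
    ∃ g : V → V → κ, ∀ q ∈ A, Set.InjOn (g · q) (pendingChildren P A q) ∧
      ∀ y ∈ pendingChildren P A q, g y q ∈ freeColors P A c R T q := by
  have h_card : ∀ q ∈ A, (pendingChildren P A q).card ≤ (freeColors P A c R T q).card := by
    intro q hq
    have hsdiff := Finset.le_card_sdiff ((completedChildren P A q).image (c · q) ∪ T) (R q)
    have hunion := Finset.card_union_le ((completedChildren P A q).image (c · q)) T
    have himage : ((completedChildren P A q).image (c · q)).card ≤
      (completedChildren P A q).card := Finset.card_image_le
    have hR := hI.card_reserved q hq
    have hsplit := card_completedChildren_add_card_pendingChildren (P := P) (A := A) (q := q)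
    unfold freeColors
    omega
  choose! f hf using fun q hq =>
    exists_injOn_mem_of_card_le (pendingChildren P A q) (fun _ => freeColors P A c R T q)
      fun _ _ => h_card q hq
  exact ⟨fun y q => f q y, hf⟩

theorem card_parentStarColors_add_le (hstar : ∀ p, P x p → (starColors P c R p).card ≤ D + 2)
    (hpar : (parents P x).card ≤ 2) (hD : (children P x).card + (parents P x).card ≤ D) :
    (parentStarColors P c R x).card + 2 * (children P x).card ≤ 4 * D := by
  have hbiUnion : (parentStarColors P c R x).card ≤ (parents P x).card * (D + 2) :=
    Finset.card_biUnion_le_card_mul _ _ _ fun p hp => hstar p (mem_parents.1 hp)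
  have hmul : (parents P x).card * D ≤ 2 * D := Nat.mul_le_mul_right D hpar
  calc (parentStarColors P c R x).card + 2 * (children P x).card
    _ ≤ (parents P x).card * (D + 2) + 2 * (children P x).card := Nat.add_le_add_right hbiUnion _
    _ = (parents P x).card * D + 2 * ((children P x).card + (parents P x).card) := by ring
    _ ≤ 4 * D := by omega

theorem card_erase_parents_le_one (hpar : (parents P y).card ≤ 2) (hyx : P y x) :
    ((parents P y).erase x).card ≤ 1 := by
  rw [Finset.card_erase_of_mem (mem_parents.2 hyx)]
  omega

theorem card_sideColors_le (hpar : ∀ y, (parents P y).card ≤ 2) {s : Finset V}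
    (hs : s ⊆ children P x) : (sideColors P g x s).card ≤ s.card := by
  refine (Finset.card_biUnion_le_card_mul _ _ 1 fun y hy => ?_).trans_eq (mul_one _)
  exact Finset.card_image_le.trans (card_erase_parents_le_one (hpar y) (mem_children.1 (hs hy)))

theorem card_forbiddenColors_add_le (hpar : ∀ y, (parents P y).card ≤ 2)
    (hD : (children P x).card + (parents P x).card ≤ D)
    (hstar : ∀ p ∈ A, (starColors P c R p).card ≤ D + 2) (hxA : parents P x ⊆ A)
    (hy : y ∈ completedChildren P (insert x A) x) :
    (forbiddenColors P A c R g x y).card + (completedChildren P (insert x A) x).card ≤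
      5 * D + 1 := by
  set N := completedChildren P (insert x A) x
  have hyx : P y x := (mem_completedChildren.1 hy).1
  have hparent : (parentStarColors P c R x).card + 2 * (children P x).card ≤ 4 * D :=
    card_parentStarColors_add_le (fun p hp => hstar p (hxA (mem_parents.2 hp))) (hpar x) hD
  have hside : (sideColors P g x (N.erase y)).card ≤ N.card - 1 := by
    rw [← Finset.card_erase_of_mem hy]
    exact card_sideColors_le hpar ((N.erase_subset y).trans completedChildren_subset_children)
  have hother : (((parents P y).erase x).biUnion (starColors P c R)).card ≤ 1 * (D + 2) := by
    refine (Finset.card_biUnion_le_card_mul _ _ (D + 2) fun q hq => ?_).trans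
      (Nat.mul_le_mul_right _ (card_erase_parents_le_one (hpar y) hyx))
    obtain ⟨hqx, hq⟩ := Finset.mem_erase.1 hq
    exact hstar q (mem_of_mem_completedChildren_insert hy (mem_parents.1 hq) hqx)
  have hunion : (forbiddenColors P A c R g x y).card ≤ (parentStarColors P c R x).card +
      (sideColors P g x (N.erase y)).card +
      (((parents P y).erase x).biUnion (starColors P c R)).card :=
    (Finset.card_union_le _ _).trans (Nat.add_le_add_right (Finset.card_union_le _ _) _)
  have hN_le : N.card ≤ (children P x).card := Finset.card_le_card completedChildren_subset_children
  have hN_pos : 0 < N.card := Finset.card_pos.2 ⟨y, hy⟩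
  omega

theorem notMem_of_notMem_forbiddenColors (hy : y ∈ completedChildren P (insert x A) x)
    (hg : ∀ q, P y q → q ≠ x → g y q ∈ R q) {k : κ} (hk : k ∉ forbiddenColors P A c R g x y) :
    k ∉ parentStarColors P c R x ∪ sideColors P g x (completedChildren P (insert x A) x) ∧
      ∀ q, P y q → q ≠ x → k ∉ starColors P c R q := by
  simp only [forbiddenColors, Finset.mem_union, not_or] at hk
  obtain ⟨⟨hparent, hside⟩, hother⟩ := hk
  have hstar : ∀ q, P y q → q ≠ x → k ∉ starColors P c R q := fun q hq hqx hmem =>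
    hother (Finset.mem_biUnion.2 ⟨q, Finset.mem_erase.2 ⟨hqx, mem_parents.2 hq⟩, hmem⟩)
  refine ⟨Finset.notMem_union.2 ⟨hparent, fun hmem => ?_⟩, hstar⟩
  obtain ⟨z, hz, q, hq, hqx, rfl⟩ := mem_sideColors.1 hmem
  obtain rfl | hzy := eq_or_ne z y
  · exact hstar q hq hqx (Finset.mem_union_left _ (hg q hq hqx))
  · exact hside (mem_sideColors.2 ⟨z, Finset.mem_erase.2 ⟨hzy, hz⟩, q, hq, hqx, rfl⟩)

theorem exists_new_colors [Nonempty κ] [Fintype κ] (hκ : 5 * D + 1 ≤ Fintype.card κ)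
    (hpar : ∀ y, (parents P y).card ≤ 2) (hD : (children P x).card + (parents P x).card ≤ D)
    (hstar : ∀ p ∈ A, (starColors P c R p).card ≤ D + 2) (hxA : parents P x ⊆ A)
    (hg : ∀ y ∈ completedChildren P (insert x A) x, ∀ q, P y q → q ≠ x → g y q ∈ R q) :
    ∃ h : V → κ, Set.InjOn h (completedChildren P (insert x A) x) ∧
      ∀ y ∈ completedChildren P (insert x A) x,
        h y ∉ parentStarColors P c R x ∪
          sideColors P g x (completedChildren P (insert x A) x) ∧
        ∀ q, P y q → q ≠ x → h y ∉ starColors P c R q := by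
  obtain ⟨h, h_inj, h_mem⟩ := exists_injOn_mem_of_card_le (completedChildren P (insert x A) x)
    (fun y => (forbiddenColors P A c R g x y)ᶜ) fun y hy => by
      have := card_forbiddenColors_add_le (g := g) hpar hD hstar hxA hy
      rw [Finset.card_compl]
      omega
  exact ⟨h, h_inj, fun y hy =>
    notMem_of_notMem_forbiddenColors hy (hg y hy) (Finset.mem_compl.1 (h_mem y hy))⟩

theorem exists_reserved_colors [Fintype κ] (hD_pos : 1 ≤ D) (hκ : 5 * D + 1 ≤ Fintype.card κ)
    (hpar : ∀ y, (parents P y).card ≤ 2) (hD : (children P x).card + (parents P x).card ≤ D)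
    (hstar : ∀ p, P x p → (starColors P c R p).card ≤ D + 2) {s : Finset V}
    (hs : s ⊆ children P x) {h : V → κ}
    (h_notMem : ∀ y ∈ s, h y ∉ parentStarColors P c R x ∪ sideColors P g x s) :
    ∃ S : Finset κ, (∀ y ∈ s, h y ∈ S) ∧
      Disjoint S (parentStarColors P c R x ∪ sideColors P g x s) ∧
      S.card = (children P x).card + 2 := by
  have h_image : s.image h ⊆ (parentStarColors P c R x ∪ sideColors P g x s)ᶜ := by
    simpa only [Finset.image_subset_iff, Finset.mem_compl] using h_notMem
  have h_image_card : (s.image h).card ≤ (children P x).card + 2 :=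
    (Finset.card_image_le.trans (Finset.card_le_card hs)).trans (Nat.le_add_right _ _)
  have h_room : (children P x).card + 2 ≤
      (parentStarColors P c R x ∪ sideColors P g x s)ᶜ.card := by
    have hparent := card_parentStarColors_add_le hstar (hpar x) hD
    have hside := card_sideColors_le (g := g) hpar hs
    have hunion := Finset.card_union_le (parentStarColors P c R x) (sideColors P g x s)
    have hs_card := Finset.card_le_card hs
    rw [Finset.card_compl]
    omega
  obtain ⟨S, hsS, hS, hS_card⟩ :=
    Finset.exists_subsuperset_card_eq h_image h_image_card h_room
  exact ⟨S, fun y hy => hsS (Finset.mem_image_of_mem h hy),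
    Finset.subset_compl_iff_disjoint_right.1 hS, hS_card⟩

theorem IsReservingColoring.exists_isExtension [Fintype κ] (hI : IsReservingColoring P A c R)
    (hD_pos : 1 ≤ D) (hκ : 5 * D + 1 ≤ Fintype.card κ) (hpar : ∀ y, (parents P y).card ≤ 2)
    (hD : ∀ y, (children P y).card + (parents P y).card ≤ D) (hx : x ∉ A)
    (hxA : parents P x ⊆ A) :
    ∃ g h S, IsExtension P A c R x g h S := by
  have : Nonempty κ := Fintype.card_pos_iff.1 (by omega)
  have hstar : ∀ p ∈ A, (starColors P c R p).card ≤ D + 2 := fun p hp =>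
    card_starColors_le (hI.card_reserved p hp) (hD p)
  obtain ⟨g, hg⟩ := hI.exists_side_colors (T := (parents P x).image (c x))
    (Finset.card_image_le.trans (hpar x))
  have hg_mem : ∀ y ∈ completedChildren P (insert x A) x, ∀ q, P y q → q ≠ x →
      g y q ∈ freeColors P A c R ((parents P x).image (c x)) q := fun y hy q hq hqx =>
    (hg q (mem_of_mem_completedChildren_insert hy hq hqx)).2 y
      (mem_pendingChildren_of_completed_insert hx hy hq)
  obtain ⟨h, h_inj, h_notMem⟩ := exists_new_colors hκ hpar (hD x) hstar hxA
    fun y hy q hq hqx => (Finset.mem_sdiff.1 (hg_mem y hy q hq hqx)).1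
  obtain ⟨S, hS_mem, hS_disj, hS_card⟩ := exists_reserved_colors hD_pos hκ hpar (hD x)
    (fun p hp => hstar p (hxA (mem_parents.2 hp))) completedChildren_subset_children
    fun y hy => (h_notMem y hy).1
  obtain ⟨hS_parent, hS_side⟩ := Finset.disjoint_union_right.1 hS_disj
  exact ⟨g, h, S, {
    card_reserved := hS_card
    reserved_disjoint := fun p hp => hS_parent.mono_right
      (Finset.subset_biUnion_of_mem (starColors P c R) (mem_parents.2 hp))
    color_mem := hS_mem
    color_injOn := h_inj
    color_notMem := fun y hy => (h_notMem y hy).2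
    side_mem := hg_mem
    side_injOn := fun q hq => (hg q hq).1.mono fun y hy =>
      mem_pendingChildren_of_completed_insert hx hy.1 hy.2
    side_notMem := fun y hy q hq hqx =>
      Finset.disjoint_right.1 hS_side (mem_sideColors.2 ⟨y, hy, q, hq, hqx, rfl⟩) }⟩

variable {h : V → κ} {S : Finset κ} {p : V}

theorem extendColoring_self (hy : y ∈ completedChildren P (insert x A) x) :
    extendColoring P A c x g h y x = h y := by
  simp [extendColoring, Finset.piecewise_eq_of_mem _ _ _ hy]

theorem extendColoring_of_ne (hy : y ∈ completedChildren P (insert x A) x) (hqx : q ≠ x) :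
    extendColoring P A c x g h y q = g y q := by
  simp [extendColoring, Finset.piecewise_eq_of_mem _ _ _ hy, hqx]

theorem extendColoring_of_notMem (hy : y ∉ completedChildren P (insert x A) x) :
    extendColoring P A c x g h y = c y :=
  Finset.piecewise_eq_of_notMem _ _ _ hy

theorem IsReservingColoring.starColors_extendColoring (hI : IsReservingColoring P A c R)
    (hx : x ∉ A) (hp : p ∈ A) :
    starColors P (extendColoring P A c x g h) (Function.update R x S) p = starColors P c R p := by
  have hpx : p ≠ x := ne_of_mem_of_not_mem hp hx
  rw [starColors, extendColoring_of_notMem (hI.notMem_completedChildren_of_mem hx hp _),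
    Function.update_of_ne hpx, starColors]

theorem starColors_extendColoring_self (hx : x ∉ A) (hxA : parents P x ⊆ A) :
    starColors P (extendColoring P A c x g h) (Function.update R x S) x =
      S ∪ (parents P x).image (c x) := by
  have hxN : x ∉ completedChildren P (insert x A) x := fun hxN =>
    hx (hxA (mem_parents.2 (mem_completedChildren.1 hxN).1))
  rw [starColors, extendColoring_of_notMem hxN, Function.update_self]

namespace IsExtension

theorem extendColoring_mem (hI : IsReservingColoring P A c R)
    (hE : IsExtension P A c R x g h S) (hx : x ∉ A)
    (hy : y ∈ completedChildren P (insert x A) q) :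
    extendColoring P A c x g h y q ∈ Function.update R x S q := by
  by_cases hyN : y ∈ completedChildren P (insert x A) x
  · obtain rfl | hqx := eq_or_ne q x
    · rw [extendColoring_self hyN, Function.update_self]
      exact hE.color_mem y hyN
    · rw [extendColoring_of_ne hyN hqx, Function.update_of_ne hqx]
      exact (Finset.mem_sdiff.1 (hE.side_mem y hyN q (mem_completedChildren.1 hy).1 hqx)).1
  · have hy_old := mem_completedChildren_of_insert hy hyN
    obtain ⟨hq, hyA⟩ := mem_completedChildren.1 hy_old
    rw [extendColoring_of_notMem hyN,
      Function.update_of_ne (ne_of_mem_of_not_mem (hyA (mem_parents.2 hq)) hx)]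
    exact hI.color_mem q y hy_old

theorem side_ne_of_completed (hE : IsExtension P A c R x g h S) (hqx : q ≠ x)
    (hyN : y ∈ completedChildren P (insert x A) x) (hq : P y q) {z : V}
    (hz : z ∈ completedChildren P A q) : g y q ≠ c z q := by
  have hfree := (Finset.mem_sdiff.1 (hE.side_mem y hyN q hq hqx)).2
  intro heq
  exact hfree (Finset.mem_union_left _ (Finset.mem_image.2 ⟨z, hz, heq.symm⟩))

theorem extendColoring_injOn (hI : IsReservingColoring P A c R)
    (hE : IsExtension P A c R x g h S) (q : V) :
    Set.InjOn (extendColoring P A c x g h · q) (completedChildren P (insert x A) q) := by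
  intro y hy z hz hyz
  rw [Finset.mem_coe] at hy hz
  have hyq := (mem_completedChildren.1 hy).1
  have hzq := (mem_completedChildren.1 hz).1
  obtain rfl | hqx := eq_or_ne q x
  · simp only [extendColoring_self hy, extendColoring_self hz] at hyz
    exact hE.color_injOn hy hz hyz
  by_cases hyN : y ∈ completedChildren P (insert x A) x <;>
    by_cases hzN : z ∈ completedChildren P (insert x A) x
  · simp only [extendColoring_of_ne hyN hqx, extendColoring_of_ne hzN hqx] at hyz
    exact hE.side_injOn q (mem_of_mem_completedChildren_insert hyN hyq hqx) ⟨hyN, hyq⟩ ⟨hzN, hzq⟩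
      hyz
  · simp only [extendColoring_of_ne hyN hqx, extendColoring_of_notMem hzN] at hyz
    exact absurd hyz
      (hE.side_ne_of_completed hqx hyN hyq (mem_completedChildren_of_insert hz hzN))
  · simp only [extendColoring_of_notMem hyN, extendColoring_of_ne hzN hqx] at hyz
    exact absurd hyz.symm
      (hE.side_ne_of_completed hqx hzN hzq (mem_completedChildren_of_insert hy hyN))
  · simp only [extendColoring_of_notMem hyN, extendColoring_of_notMem hzN] at hyz
    exact hI.color_injOn q (mem_completedChildren_of_insert hy hyN)
      (mem_completedChildren_of_insert hz hzN) hyz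

theorem extendColoring_notMem (hI : IsReservingColoring P A c R)
    (hE : IsExtension P A c R x g h S) (hpar : ∀ y, (parents P y).card ≤ 2) (hx : x ∉ A)
    (hxA : parents P x ⊆ A) (hy : y ∈ completedChildren P (insert x A) q) {q' : V} (hq' : P y q')
    (hne : q ≠ q') :
    extendColoring P A c x g h y q' ∉
      starColors P (extendColoring P A c x g h) (Function.update R x S) q := by
  have hq := (mem_completedChildren.1 hy).1
  by_cases hyN : y ∈ completedChildren P (insert x A) x
  · obtain rfl | hqx := eq_or_ne q x
    · have hfree := (Finset.mem_sdiff.1 (hE.side_mem y hyN q' hq' hne.symm)).2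
      rw [extendColoring_of_ne hyN hne.symm, starColors_extendColoring_self hx hxA,
        Finset.notMem_union]
      exact ⟨hE.side_notMem y hyN q' hq' hne.symm, (Finset.notMem_union.1 hfree).2⟩
    · obtain rfl : q' = x := by
        by_contra hqx'
        exact hne (Finset.card_le_one.1
          (card_erase_parents_le_one (hpar y) (mem_completedChildren.1 hyN).1)
          q (by simp [hqx, hq]) q' (by simp [hqx', hq']))
      rw [extendColoring_self hyN,
        hI.starColors_extendColoring hx (mem_of_mem_completedChildren_insert hyN hq hqx)]
      exact hE.color_notMem y hyN q hq hqx
  · have hy_old := mem_completedChildren_of_insert hy hyN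
    rw [extendColoring_of_notMem hyN,
      hI.starColors_extendColoring hx ((mem_completedChildren.1 hy_old).2 (mem_parents.2 hq))]
    exact hI.color_notMem q y hy_old q' hq' hne

theorem isReservingColoring (hI : IsReservingColoring P A c R)
    (hE : IsExtension P A c R x g h S) (hpar : ∀ y, (parents P y).card ≤ 2) (hx : x ∉ A)
    (hxA : parents P x ⊆ A) :
    IsReservingColoring P (insert x A) (extendColoring P A c x g h) (Function.update R x S) where
  parents_subset z hz := by
    obtain rfl | hz := Finset.mem_insert.1 hz
    · exact hxA.trans (Finset.subset_insert _ _)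
    · exact (hI.parents_subset z hz).trans (Finset.subset_insert _ _)
  card_reserved q hq := by
    obtain rfl | hq := Finset.mem_insert.1 hq
    · rw [Function.update_self, hE.card_reserved]
    · rw [Function.update_of_ne (ne_of_mem_of_not_mem hq hx), hI.card_reserved q hq]
  color_mem q y hy := hE.extendColoring_mem hI hx hy
  color_injOn := hE.extendColoring_injOn hI
  reserved_disjoint z hz p hp := by
    obtain rfl | hz := Finset.mem_insert.1 hz
    · rw [Function.update_self, hI.starColors_extendColoring hx (hxA (mem_parents.2 hp))]
      exact hE.reserved_disjoint p hp
    · rw [Function.update_of_ne (ne_of_mem_of_not_mem hz hx),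
        hI.starColors_extendColoring hx (hI.parents_subset z hz (mem_parents.2 hp))]
      exact hI.reserved_disjoint z hz p hp
  color_notMem q y hy q' hq' hne := hE.extendColoring_notMem hI hpar hx hxA hy hq' hne

end IsExtension

theorem exists_isReservingColoring_univ [Fintype κ] (hP : WellFounded fun p x => P x p)
    (hD_pos : 1 ≤ D) (hκ : 5 * D + 1 ≤ Fintype.card κ) (hpar : ∀ y, (parents P y).card ≤ 2)
    (hD : ∀ y, (children P y).card + (parents P y).card ≤ D) :
    ∃ (c : V → V → κ) (R : V → Finset κ), IsReservingColoring P Finset.univ c R := by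
  have : Nonempty κ := Fintype.card_pos_iff.1 (by omega)
  let processed : Set (Finset V) :=
    {A | ∃ (c : V → V → κ) (R : V → Finset κ), IsReservingColoring P A c R}
  have h_empty : ∅ ∈ processed :=
    ⟨fun _ _ => Classical.arbitrary κ, fun _ => ∅, IsReservingColoring.empty⟩
  obtain ⟨A, ⟨c, R, hI⟩, hA_max⟩ := processed.toFinite.exists_maximal ⟨∅, h_empty⟩
  suffices h_univ : A = Finset.univ from h_univ ▸ ⟨c, R, hI⟩
  by_contra hA
  obtain ⟨x, hx, hx_min⟩ := hP.has_min {x | x ∉ A}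
    (not_forall.1 fun h => hA (Finset.eq_univ_of_forall h))
  have hxA : parents P x ⊆ A := fun p hp => not_not.1 fun hpA => hx_min p hpA (mem_parents.1 hp)
  obtain ⟨g, h, S, hE⟩ := hI.exists_isExtension hD_pos hκ hpar hD hx hxA
  have h_insert : insert x A ∈ processed := ⟨_, _, hE.isReservingColoring hI hpar hx hxA⟩
  exact hx (hA_max h_insert (Finset.subset_insert x A) (Finset.mem_insert_self x A))

end Extension

section StrongColoring

variable {V κ : Type*} {G : SimpleGraph V}

theorem hasStrongColoring_bot (k : ℕ) [NeZero k] : HasStrongColoring (⊥ : SimpleGraph V) k :=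
  ⟨fun _ => 0, by simp [IsStrongColoring]⟩

theorem Conflict.exists_eq {e e' : Sym2 V} (h : Conflict G e e') :
    (∃ v a b, a ≠ b ∧ e = s(v, a) ∧ e' = s(v, b)) ∨
      ∃ v w a b, G.Adj v w ∧ a ≠ w ∧ b ≠ v ∧ e = s(v, a) ∧ e' = s(w, b) := by
  obtain ⟨hne, h⟩ := h
  by_cases hshare : ∃ v, v ∈ e ∧ v ∈ e'
  · obtain ⟨v, hv, hv'⟩ := hshare
    obtain ⟨a, rfl⟩ := Sym2.mem_iff_exists.1 hv
    obtain ⟨b, rfl⟩ := Sym2.mem_iff_exists.1 hv'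
    exact Or.inl ⟨v, a, b, fun hab => hne (by rw [hab]), rfl, rfl⟩
  obtain ⟨f, hf, ⟨v, hv, hvf⟩, ⟨w, hw, hwf⟩⟩ := h.resolve_left hshare
  have hvw : v ≠ w := fun hvw => hshare ⟨v, hv, hvw ▸ hw⟩
  obtain rfl : f = s(v, w) := (Sym2.mem_and_mem_iff hvw).1 ⟨hvf, hwf⟩
  obtain ⟨a, rfl⟩ := Sym2.mem_iff_exists.1 hv
  obtain ⟨b, rfl⟩ := Sym2.mem_iff_exists.1 hw
  refine Or.inr ⟨v, w, a, b, hf, ?_, ?_, rfl, rfl⟩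
  · rintro rfl
    exact hshare ⟨a, Sym2.mem_mk_right _ _, Sym2.mem_mk_left _ _⟩
  · rintro rfl
    exact hshare ⟨b, Sym2.mem_mk_left _ _, Sym2.mem_mk_right _ _⟩

variable [Fintype V] {P : V → V → Prop} {c : V → V → κ} {R : V → Finset κ} {C : Sym2 V → κ}

namespace IsReservingColoring

theorem edgeColor_mem_starColors (hI : IsReservingColoring P Finset.univ c R)
    (hC : ∀ a b, P a b → C s(a, b) = c a b) {v a : V} (hva : P v a ∨ P a v) :
    C s(v, a) ∈ starColors P c R v := by
  obtain hva | hav := hva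
  · rw [hC v a hva]
    exact mem_starColors.2 (Or.inr ⟨a, hva, rfl⟩)
  · rw [Sym2.eq_swap, hC a v hav]
    exact mem_starColors.2 (Or.inl (hI.color_mem v a (by simp [hav])))

theorem edgeColor_notMem_starColors (hI : IsReservingColoring P Finset.univ c R)
    (hC : ∀ a b, P a b → C s(a, b) = c a b) {v w a : V} (hvw : P v w) (hva : P v a ∨ P a v)
    (haw : a ≠ w) : C s(v, a) ∉ starColors P c R w := by
  obtain hva | hav := hva
  · rw [hC v a hva]
    exact hI.color_notMem w v (by simp [hvw]) a hva haw.symm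
  · rw [Sym2.eq_swap, hC a v hav]
    exact Finset.disjoint_left.1 (hI.reserved_disjoint v (Finset.mem_univ v) w hvw)
      (hI.color_mem v a (by simp [hav]))

theorem edgeColor_ne_of_parent (hI : IsReservingColoring P Finset.univ c R)
    (hC : ∀ a b, P a b → C s(a, b) = c a b) {v w a b : V} (hvw : P v w) (hva : P v a ∨ P a v)
    (hwb : P w b ∨ P b w) (haw : a ≠ w) : C s(v, a) ≠ C s(w, b) := fun heq =>
  hI.edgeColor_notMem_starColors hC hvw hva haw (heq ▸ hI.edgeColor_mem_starColors hC hwb)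

theorem edgeColor_ne_of_common_endpoint (hI : IsReservingColoring P Finset.univ c R)
    (hC : ∀ a b, P a b → C s(a, b) = c a b) {v a b : V} (hva : P v a ∨ P a v)
    (hvb : P v b ∨ P b v) (hab : a ≠ b) : C s(v, a) ≠ C s(v, b) := by
  by_cases hpb : P v b
  · rw [Sym2.eq_swap (a := v) (b := b)]
    exact hI.edgeColor_ne_of_parent hC hpb hva (Or.inr hpb) hab
  by_cases hpa : P v a
  · rw [Sym2.eq_swap (a := v) (b := a)]
    exact (hI.edgeColor_ne_of_parent hC hpa hvb (Or.inr hpa) hab.symm).symm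
  have hav := hva.resolve_left hpa
  have hbv := hvb.resolve_left hpb
  rw [Sym2.eq_swap, hC a v hav, Sym2.eq_swap, hC b v hbv]
  exact (hI.color_injOn v).ne (by simp [hav]) (by simp [hbv]) hab

theorem isStrongColoring {k : ℕ} {c : V → V → Fin k} {R : V → Finset (Fin k)}
    {C : Sym2 V → Fin k} (hP : IsAcyclicOrientation G P)
    (hI : IsReservingColoring P Finset.univ c R) (hC : ∀ a b, P a b → C s(a, b) = c a b) :
    IsStrongColoring G C := by
  intro e he e' he' hconflict
  obtain ⟨v, a, b, hab, rfl, rfl⟩ | ⟨v, w, a, b, hvw, haw, hbv, rfl, rfl⟩ := hconflict.exists_eq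
  · exact hI.edgeColor_ne_of_common_endpoint hC ((hP.adj_iff v a).1 he) ((hP.adj_iff v b).1 he') hab
  · have hva := (hP.adj_iff v a).1 he
    have hwb := (hP.adj_iff w b).1 he'
    obtain hvw | hwv := (hP.adj_iff v w).1 hvw
    · exact hI.edgeColor_ne_of_parent hC hvw hva hwb haw
    · exact (hI.edgeColor_ne_of_parent hC hwv hwb hva hbv).symm

end IsReservingColoring

theorem IsAcyclicOrientation.hasStrongColoring (hP : IsAcyclicOrientation G P)
    (hpar : ∀ x, (parents P x).card ≤ 2) {D : ℕ} (hD_pos : 1 ≤ D) (hD : ∀ x, G.degree x ≤ D) :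
    HasStrongColoring G (5 * D + 1) := by
  obtain ⟨c, R, hI⟩ := exists_isReservingColoring_univ (κ := Fin (5 * D + 1)) hP.wellFounded hD_pos
    (Fintype.card_fin _).ge hpar fun x => (hP.card_children_add_card_parents x).trans_le (hD x)
  obtain ⟨C, hC⟩ := exists_sym2_eq_of_asymm hP.asymm c
  exact ⟨C, hI.isStrongColoring hP hC⟩

end StrongColoring

/-- Every 2-degenerate graph `G` with maximum degree `Δ` satisfies
`χ'_s(G) ≤ 5Δ + 1`. -/
theorem strong_chromatic_index_two_degenerate {V : Type*} [Fintype V] (G : SimpleGraph V)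
    (h2 : TwoDegenerate G) :
    strongChromaticIndex G ≤ 5 * G.maxDegree + 1 := by
  refine Nat.sInf_le ?_
  obtain rfl | hG := eq_or_ne G ⊥
  · exact hasStrongColoring_bot _
  have hΔ : 1 ≤ G.maxDegree := Nat.one_le_iff_ne_zero.2 fun h => hG (G.maxDegree_eq_zero_iff.1 h)
  obtain ⟨P, hP, hpar⟩ := exists_isAcyclicOrientation_of_degenerate h2
  exact hP.hasStrongColoring hpar hΔ G.degree_le_maxDegree

end StrongEC
end

section
/- Let Δ ≥ 9 be an integer. Every finite simple graph G with maximum average degree Mad(G) < 8/3 and maximum degree at most Δ satisfies χ'_s(G) ≤ 3Δ − 3. -/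
open scoped Classical

namespace StrongEC

/-- The maximum average degree of a finite graph `G`: the supremum over nonempty vertex
subsets `A` of `2 * e(A) / |A|`, where `e(A)` is the number of edges of `G` inside `A`
(this equals the maximum of `2|E(H)|/|V(H)|` over all subgraphs `H` with at least one
vertex). -/
noncomputable def mad {V : Type*} (G : SimpleGraph V) : ℝ :=
  sSup {x : ℝ | ∃ A : Finset V, A.Nonempty ∧
    x = 2 * ({e ∈ G.edgeSet | ∀ v ∈ e, v ∈ A}.ncard : ℝ) / (A.card : ℝ)}

/-!
Take a counterexample `G` with as few edges as possible. Deleting some edges leaves a graph with a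
strong coloring, and a deleted edge can be given a color again unless the degrees around it are
large; this forces the neighbors of a vertex with a leaf, or with a neighbor of degree two or
three whose other neighbors have degree two, to have large total degree. A vertex `v` with a leaf
and only two neighbors of degree at least two is then fat: its degree and those of `u` and `w`,
these two neighbors, are `Δ`. The edges from `v` to its leaves can be colored last as soon as one
color occurs both at `u` and at `w`, and such a color is found by exchanging the colors of `vw`
and of an edge from `w` to a leaf. This limits the number of fat vertices at `u`.

Now delete all leaves. A vertex with at least eight remaining neighbors can afford to give `2 / 3`
to each of them, and the restrictions above allow the vertices with three to seven remaining
neighbors to serve the rest, so that every remaining vertex ends up with charge at least `8 / 3`.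
Hence the remaining graph has average degree at least `8 / 3`.
-/

open scoped Finset

section Conflict

variable {V : Type*} {G : SimpleGraph V} {a b : V} {e e' : Sym2 V}

theorem Conflict.symm (h : Conflict G e e') : Conflict G e' e := by
  obtain ⟨hne, ⟨v, hv, hv'⟩ | ⟨f, hf, hef, he'f⟩⟩ := h
  exacts [⟨hne.symm, .inl ⟨v, hv', hv⟩⟩, ⟨hne.symm, .inr ⟨f, hf, he'f, hef⟩⟩]

theorem conflict_mk_iff (he' : e' ∈ G.edgeSet) :
    Conflict G s(a, b) e' ↔ ∃ c ∈ e', (G.Adj a c ∧ c ≠ b) ∨ (G.Adj b c ∧ c ≠ a) := by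
  constructor
  · rintro ⟨hne, h⟩
    have of_mem : a ∈ e' ∨ b ∈ e' → ∃ c ∈ e', (G.Adj a c ∧ c ≠ b) ∨ (G.Adj b c ∧ c ≠ a) := by
      rintro (⟨c, rfl⟩ | ⟨c, rfl⟩)
      · exact ⟨c, Sym2.mem_mk_right _ _, .inl ⟨he', fun h => hne (by rw [h])⟩⟩
      · exact ⟨c, Sym2.mem_mk_right _ _, .inr ⟨he', fun h => hne (by rw [h, Sym2.eq_swap])⟩⟩
    rcases h with ⟨v, hv, hv'⟩ | ⟨f, hf, ⟨v, hv, w, rfl⟩, c, hc, hcf⟩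
    · rcases Sym2.mem_iff.1 hv with rfl | rfl
      exacts [of_mem (.inl hv'), of_mem (.inr hv')]
    · by_cases hmem : a ∈ e' ∨ b ∈ e'
      · exact of_mem hmem
      have hvw : G.Adj v w := hf
      grind
  · rintro ⟨c, hc, ⟨hac, hcb⟩ | ⟨hbc, hca⟩⟩
    · exact ⟨by grind [hac.ne], .inr ⟨s(a, c), hac, ⟨a, by simp⟩, c, hc, by simp⟩⟩
    · exact ⟨by grind [hbc.ne], .inr ⟨s(b, c), hbc, ⟨b, by simp⟩, c, hc, by simp⟩⟩

end Conflict

theorem mem_incidenceFinset_iff {V : Type*} [Fintype V] {G : SimpleGraph V} {v : V} {e : Sym2 V} :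
    e ∈ G.incidenceFinset v ↔ e ∈ G.edgeSet ∧ v ∈ e := by
  rw [SimpleGraph.mem_incidenceFinset, SimpleGraph.incidenceSet, Set.mem_sep_iff]

/-- A strong edge-coloring of the edges of `G` outside the finite set `uncolored`. -/
structure PartialStrongColoring {V : Type*} (G : SimpleGraph V) (k : ℕ) where
  /-- The color of each edge, without meaning on `uncolored` and off the edge set. -/
  color : Sym2 V → Fin k
  /-- The edges waiting for a color. -/
  uncolored : Finset (Sym2 V)
  proper : ∀ ⦃e e'⦄, e ∈ G.edgeSet → e' ∈ G.edgeSet → e ∉ uncolored → e' ∉ uncolored →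
    Conflict G e e' → color e ≠ color e'

namespace PartialStrongColoring

variable {V : Type*} {G : SimpleGraph V} {k : ℕ} {P Q : PartialStrongColoring G k}

/-- `P ≤ Q` if `Q` extends the coloring `P`. -/
instance : Preorder (PartialStrongColoring G k) where
  le P Q := Q.uncolored ⊆ P.uncolored ∧ ∀ e ∉ P.uncolored, Q.color e = P.color e
  le_refl _ := ⟨subset_rfl, fun _ _ => rfl⟩
  le_trans _ _ _ h h' := ⟨h'.1.trans h.1, fun e he => (h'.2 e (mt (@h.1 e) he)).trans (h.2 e he)⟩

theorem isStrongColoring (P : PartialStrongColoring G k) (hP : P.uncolored = ∅) :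
    IsStrongColoring G P.color :=
  fun _ he _ he' => P.proper he he' (by simp [hP]) (by simp [hP])

theorem color_ne_color {a b c : V} (hab : G.Adj a b) (hac : G.Adj a c) (hcb : c ≠ b)
    (hU : s(a, b) ∉ P.uncolored) (hU' : s(a, c) ∉ P.uncolored) :
    P.color s(a, b) ≠ P.color s(a, c) :=
  P.proper hab hac hU hU' ((conflict_mk_iff hac).2 ⟨c, by simp, .inl ⟨hac, hcb⟩⟩)

/-- Removing the colors of a set of edges. -/
noncomputable def uncolor (P : PartialStrongColoring G k) (T : Finset (Sym2 V)) :
    PartialStrongColoring G k where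
  color := P.color
  uncolored := P.uncolored ∪ T
  proper _ _ he he' hU hU' :=
    P.proper he he' (mt (Finset.mem_union_left T) hU) (mt (Finset.mem_union_left T) hU')

/-- A strong coloring of `G.deleteEdges T` colors `G` outside of `U`, provided that every deleted
edge has an endpoint all of whose edges are in `U`. -/
def ofDeleteEdges [Fintype V] {T U : Finset (Sym2 V)} {C : Sym2 V → Fin k}
    (hC : IsStrongColoring (G.deleteEdges T) C) (hTU : T ⊆ U)
    (hT : ∀ e ∈ T, ∃ a ∈ e, G.incidenceFinset a ⊆ U) : PartialStrongColoring G k where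
  color := C
  uncolored := U
  proper e e' he he' hU hU' hc := by
    have adj_of_notMem ⦃x y⦄ (h : G.Adj x y) (hxy : s(x, y) ∉ U) : (G.deleteEdges T).Adj x y :=
      SimpleGraph.deleteEdges_adj.2 ⟨h, fun hm => hxy (hTU hm)⟩
    have adj_of_adj ⦃x y c d⦄ (hxy : G.Adj x y) (hxyU : s(x, y) ∉ U) (hcd : G.Adj c d)
        (hcdU : s(c, d) ∉ U) (hxc : G.Adj x c) : (G.deleteEdges T).Adj x c := by
      refine SimpleGraph.deleteEdges_adj.2 ⟨hxc, fun hm => ?_⟩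
      obtain ⟨z, hz, hzU⟩ := hT _ hm
      rcases Sym2.mem_iff.1 hz with rfl | rfl
      · exact hxyU (hzU (mem_incidenceFinset_iff.2 ⟨hxy, Sym2.mem_mk_left _ _⟩))
      · exact hcdU (hzU (mem_incidenceFinset_iff.2 ⟨hcd, Sym2.mem_mk_left _ _⟩))
    induction e with | _ a b
    have hab := adj_of_notMem he hU
    obtain ⟨c, ⟨d, rfl⟩, h⟩ := (conflict_mk_iff he').1 hc
    have hcd := adj_of_notMem he' hU'
    refine hC _ hab _ hcd ((conflict_mk_iff hcd).2 ⟨c, Sym2.mem_mk_left c d, ?_⟩)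
    refine h.imp (fun h => ⟨adj_of_adj he hU he' hU' h.1, h.2⟩)
      fun h => ⟨adj_of_adj (SimpleGraph.Adj.symm he) (by rwa [Sym2.eq_swap]) he' hU' h.1, h.2⟩

section Colors

variable [Fintype V]

/-- The colors occurring on the edges at the vertex `c`. -/
noncomputable def colorsAt (P : PartialStrongColoring G k) (c : V) : Finset (Fin k) :=
  (G.incidenceFinset c \ P.uncolored).image P.color

variable {a b c : V} {γ : Fin k}

theorem mem_colorsAt :
    γ ∈ P.colorsAt c ↔ ∃ b, G.Adj c b ∧ s(c, b) ∉ P.uncolored ∧ P.color s(c, b) = γ := by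
  simp only [colorsAt, Finset.mem_image, Finset.mem_sdiff, mem_incidenceFinset_iff]
  constructor
  · rintro ⟨e, ⟨⟨he, b, rfl⟩, hU⟩, rfl⟩
    exact ⟨b, he, hU, rfl⟩
  · rintro ⟨b, hb, hU, rfl⟩
    exact ⟨_, ⟨⟨hb, Sym2.mem_mk_left c b⟩, hU⟩, rfl⟩

theorem color_mem_colorsAt (hab : G.Adj a b) (hU : s(a, b) ∉ P.uncolored) :
    P.color s(a, b) ∈ P.colorsAt a :=
  mem_colorsAt.2 ⟨b, hab, hU, rfl⟩

theorem color_notMem_colorsAt (hab : G.Adj a b) (hU : s(a, b) ∉ P.uncolored) (hac : G.Adj a c)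
    (hcb : c ≠ b) : P.color s(a, b) ∉ P.colorsAt c := fun h => by
  obtain ⟨d, hcd, hU', heq⟩ := mem_colorsAt.1 h
  refine P.proper hab hcd hU hU' ?_ heq.symm
  exact (conflict_mk_iff hcd).2 ⟨c, Sym2.mem_mk_left c d, .inl ⟨hac, hcb⟩⟩

theorem colorsAt_subset_of_le (hPQ : P ≤ Q) : P.colorsAt c ⊆ Q.colorsAt c := fun γ h => by
  obtain ⟨b, hb, hU, rfl⟩ := mem_colorsAt.1 h
  exact mem_colorsAt.2 ⟨b, hb, mt (@hPQ.1 _) hU, hPQ.2 _ hU⟩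

theorem colorsAt_eq_of_le (hPQ : P ≤ Q)
    (h : ∀ b, G.Adj c b → s(c, b) ∈ P.uncolored → s(c, b) ∈ Q.uncolored) :
    Q.colorsAt c = P.colorsAt c := by
  refine Finset.Subset.antisymm (fun γ hγ => ?_) (colorsAt_subset_of_le hPQ)
  obtain ⟨b, hb, hU, rfl⟩ := mem_colorsAt.1 hγ
  have hbU := mt (h b hb) hU
  exact mem_colorsAt.2 ⟨b, hb, hbU, (hPQ.2 _ hbU).symm⟩

end Colors

end PartialStrongColoring

section Extension

variable {V : Type*} [Fintype V] {G : SimpleGraph V} {k : ℕ}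

/-- The number of edges at `c` outside of the set `U` of uncolored edges. -/
noncomputable def coloredDegree (G : SimpleGraph V) (U : Finset (Sym2 V)) (c : V) : ℕ :=
  #(G.incidenceFinset c \ U)

variable {U U' : Finset (Sym2 V)} {a b c : V}

theorem coloredDegree_le_degree : coloredDegree G U c ≤ G.degree c :=
  (Finset.card_le_card Finset.sdiff_subset).trans_eq (G.card_incidenceFinset_eq_degree c)

theorem coloredDegree_anti (h : U ⊆ U') : coloredDegree G U' c ≤ coloredDegree G U c :=
  Finset.card_le_card (Finset.sdiff_subset_sdiff subset_rfl h)

theorem coloredDegree_lt_degree (hab : G.Adj a b) (hU : s(a, b) ∈ U) :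
    coloredDegree G U a < G.degree a := by
  rw [← G.card_incidenceFinset_eq_degree]
  refine Finset.card_lt_card ⟨Finset.sdiff_subset, fun h => ?_⟩
  exact (Finset.mem_sdiff.1 (h (mem_incidenceFinset_iff.2 ⟨hab, Sym2.mem_mk_left a b⟩))).2 hU

namespace PartialStrongColoring

variable {P Q : PartialStrongColoring G k} {γ : Fin k} {T : Finset (Sym2 V)}

theorem card_colorsAt_le (P : PartialStrongColoring G k) (c : V) :
    #(P.colorsAt c) ≤ coloredDegree G P.uncolored c :=
  Finset.card_image_le

/-- The colors that the edge `ab` must avoid. -/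
noncomputable def forbidden (P : PartialStrongColoring G k) (a b : V) : Finset (Fin k) :=
  ((G.neighborFinset a).erase b).biUnion P.colorsAt ∪
    ((G.neighborFinset b).erase a).biUnion P.colorsAt

theorem mem_forbidden : γ ∈ P.forbidden a b ↔
    (∃ c, c ≠ b ∧ G.Adj a c ∧ γ ∈ P.colorsAt c) ∨ ∃ c, c ≠ a ∧ G.Adj b c ∧ γ ∈ P.colorsAt c := by
  simp only [forbidden, Finset.mem_union, Finset.mem_biUnion, Finset.mem_erase,
    SimpleGraph.mem_neighborFinset, and_assoc]

theorem card_forbidden_le (P : PartialStrongColoring G k) (a b : V) :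
    #(P.forbidden a b) ≤ ∑ c ∈ (G.neighborFinset a).erase b, coloredDegree G P.uncolored c +
      ∑ c ∈ (G.neighborFinset b).erase a, coloredDegree G P.uncolored c :=
  (Finset.card_union_le _ _).trans <| add_le_add
    (Finset.card_biUnion_le.trans (Finset.sum_le_sum fun c _ => P.card_colorsAt_le c))
    (Finset.card_biUnion_le.trans (Finset.sum_le_sum fun c _ => P.card_colorsAt_le c))

/-- Giving the color `γ` to the uncolored edge `ab`. -/
noncomputable def extend (P : PartialStrongColoring G k) (a b : V) (γ : Fin k)
    (hγ : γ ∉ P.forbidden a b) : PartialStrongColoring G k where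
  color := Function.update P.color s(a, b) γ
  uncolored := P.uncolored.erase s(a, b)
  proper := by
    have avoid ⦃e⦄ (he : e ∈ G.edgeSet) (hU : e ∉ P.uncolored) (hc : Conflict G s(a, b) e) :
        P.color e ≠ γ := by
      rintro rfl
      obtain ⟨c, ⟨d, rfl⟩, h⟩ := (conflict_mk_iff he).1 hc
      have hmem := color_mem_colorsAt he hU
      exact hγ (mem_forbidden.2 (h.imp (fun h => ⟨c, h.2, h.1, hmem⟩) fun h => ⟨c, h.2, h.1, hmem⟩))
    intro e e' he he' hU hU' hc
    rw [Finset.mem_erase, not_and'] at hU hU'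
    rcases eq_or_ne e s(a, b) with rfl | hne
    · rw [Function.update_self, Function.update_of_ne hc.1.symm]
      exact (avoid he' (fun hm => hU' hm hc.1.symm) hc).symm
    · have heU : e ∉ P.uncolored := fun hm => hU hm hne
      rw [Function.update_of_ne hne]
      rcases eq_or_ne e' s(a, b) with rfl | hne'
      · rw [Function.update_self]
        exact avoid he heU hc.symm
      · rw [Function.update_of_ne hne']
        exact P.proper he he' heU (fun hm => hU' hm hne') hc

theorem exists_extend (hγ : γ ∉ P.forbidden a b) (hU : s(a, b) ∈ P.uncolored) :
    ∃ Q ≥ P, Q.uncolored = P.uncolored.erase s(a, b) ∧ Q.color s(a, b) = γ :=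
  ⟨P.extend a b γ hγ, ⟨Finset.erase_subset _ _, fun _ he =>
    Function.update_of_ne (ne_of_mem_of_not_mem hU he).symm _ _⟩, rfl, Function.update_self ..⟩

theorem exists_extend_of_card_lt (hU : s(a, b) ∈ P.uncolored) (hlt : #(P.forbidden a b) < k) :
    ∃ Q ≥ P, Q.uncolored = P.uncolored.erase s(a, b) := by
  obtain ⟨γ, hγ⟩ : ∃ γ, γ ∉ P.forbidden a b := by
    by_contra! hall
    rw [Finset.eq_univ_iff_forall.2 hall, Finset.card_univ, Fintype.card_fin] at hlt
    exact hlt.false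
  obtain ⟨Q, hPQ, hQ, -⟩ := exists_extend hγ hU
  exact ⟨Q, hPQ, hQ⟩

theorem exists_extend_of_forall (T : Finset (Sym2 V))
    (h : ∀ Q ≥ P, P.uncolored \ T ⊆ Q.uncolored → ∀ e ∈ T, e ∈ Q.uncolored →
      ∃ a b, e = s(a, b) ∧ #(Q.forbidden a b) < k) :
    ∃ Q ≥ P, Q.uncolored = P.uncolored \ T := by
  induction T using Finset.induction_on with
  | empty => exact ⟨P, le_rfl, by simp⟩
  | insert e T _ ih =>
    obtain ⟨Q, hPQ, hQ⟩ := ih fun Q hPQ hsub e' he' =>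
      h Q hPQ ((Finset.sdiff_subset_sdiff subset_rfl (Finset.subset_insert e T)).trans hsub) e'
        (Finset.mem_insert_of_mem he')
    rw [Finset.sdiff_insert, ← hQ]
    by_cases he : e ∈ Q.uncolored
    · obtain ⟨a, b, rfl, hlt⟩ := h Q hPQ
        (hQ ▸ Finset.sdiff_subset_sdiff subset_rfl (Finset.subset_insert _ T)) e
        (Finset.mem_insert_self e T) he
      obtain ⟨R, hQR, hR⟩ := exists_extend_of_card_lt he hlt
      exact ⟨R, hPQ.trans hQR, hR⟩
    · exact ⟨Q, hPQ, (Finset.erase_eq_of_notMem he).symm⟩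

theorem exists_extend_of_sum_lt (T : Finset (Sym2 V))
    (h : ∀ e ∈ T, ∃ a b, e = s(a, b) ∧
      ∑ c ∈ (G.neighborFinset a).erase b, coloredDegree G (P.uncolored \ T) c +
        ∑ c ∈ (G.neighborFinset b).erase a, coloredDegree G (P.uncolored \ T) c < k) :
    ∃ Q ≥ P, Q.uncolored = P.uncolored \ T := by
  refine exists_extend_of_forall T fun Q _ hsub e he _ => ?_
  obtain ⟨a, b, rfl, hlt⟩ := h e he
  refine ⟨a, b, rfl, (Q.card_forbidden_le a b).trans_lt (lt_of_le_of_lt ?_ hlt)⟩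
  exact add_le_add (Finset.sum_le_sum fun c _ => coloredDegree_anti hsub)
    (Finset.sum_le_sum fun c _ => coloredDegree_anti hsub)

end PartialStrongColoring

end Extension

section Leaves

variable {V : Type*} [Fintype V] {G : SimpleGraph V} {k : ℕ} {v w q : V}

/-- The neighbors of `v` of degree one. -/
noncomputable def leaves (G : SimpleGraph V) (v : V) : Finset V :=
  {w ∈ G.neighborFinset v | G.degree w = 1}

/-- The neighbors of `v` of degree at least two. -/
noncomputable def coreNeighbors (G : SimpleGraph V) (v : V) : Finset V :=
  {w ∈ G.neighborFinset v | 2 ≤ G.degree w}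

theorem mem_leaves : q ∈ leaves G v ↔ G.Adj v q ∧ G.degree q = 1 := by
  simp only [leaves, Finset.mem_filter, SimpleGraph.mem_neighborFinset]

theorem mem_coreNeighbors : w ∈ coreNeighbors G v ↔ G.Adj v w ∧ 2 ≤ G.degree w := by
  simp only [coreNeighbors, Finset.mem_filter, SimpleGraph.mem_neighborFinset]

theorem mem_leaves_or_mem_coreNeighbors (h : G.Adj v w) :
    w ∈ leaves G v ∨ w ∈ coreNeighbors G v := by
  have hpos : 0 < G.degree w := (G.degree_pos_iff_exists_adj w).2 ⟨v, h.symm⟩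
  rw [mem_leaves, mem_coreNeighbors]
  grind

theorem eq_of_mem_leaves (hq : q ∈ leaves G v) (h : G.Adj q w) : w = v := by
  obtain ⟨hvq, hdeg⟩ := mem_leaves.1 hq
  obtain ⟨x, -, hx⟩ := (G.degree_eq_one_iff_existsUnique_adj).1 hdeg
  rw [hx w h, hx v hvq.symm]

theorem neighborFinset_erase_of_mem_leaves (hq : q ∈ leaves G v) :
    (G.neighborFinset q).erase v = ∅ := by
  ext w
  simpa using fun hw h => hw (eq_of_mem_leaves hq h)

namespace PartialStrongColoring

variable {P : PartialStrongColoring G k} {γ : Fin k} {a b : V}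

theorem colorsAt_subset_of_mem_leaves (hq : q ∈ leaves G v) : P.colorsAt q ⊆ P.colorsAt v := by
  intro γ hγ
  obtain ⟨b, hb, hU, rfl⟩ := mem_colorsAt.1 hγ
  obtain rfl := eq_of_mem_leaves hq hb
  rw [Sym2.eq_swap] at hU ⊢
  exact color_mem_colorsAt hb.symm hU

theorem mem_forbidden_of_mem_leaves (hq : q ∈ leaves G v) :
    γ ∈ P.forbidden v q ↔ ∃ c, c ≠ q ∧ G.Adj v c ∧ γ ∈ P.colorsAt c := by
  rw [mem_forbidden, or_iff_left]
  rintro ⟨c, hc, hqc, -⟩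
  exact hc (eq_of_mem_leaves hq hqc)

theorem exists_swap (hab : G.Adj a b) (hq : q ∈ leaves G b)
    (hU : s(a, b) ∉ P.uncolored) (hU' : s(b, q) ∉ P.uncolored)
    (hfar : ∀ c, G.Adj a c → c ≠ b → P.color s(b, q) ∉ P.colorsAt c) :
    ∃ Q : PartialStrongColoring G k, Q.uncolored = P.uncolored ∧
      Q.color = P.color ∘ Equiv.swap s(a, b) s(b, q) := by
  have hbq := (mem_leaves.1 hq).1
  have hab_avoid ⦃e⦄ (he : e ∈ G.edgeSet) (heU : e ∉ P.uncolored) (hne : e ≠ s(b, q))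
      (hc : Conflict G s(a, b) e) : P.color s(b, q) ≠ P.color e := fun heq => by
    obtain ⟨c, ⟨d, rfl⟩, ⟨hac, hcb⟩ | ⟨hbc, -⟩⟩ := (conflict_mk_iff he).1 hc
    · exact hfar c hac hcb (heq ▸ color_mem_colorsAt he heU)
    · refine color_notMem_colorsAt hbq hU' hbc ?_ (heq ▸ color_mem_colorsAt he heU)
      rintro rfl
      exact hne (by rw [show d = b from eq_of_mem_leaves hq he, Sym2.eq_swap])
  have hbq_avoid ⦃e⦄ (he : e ∈ G.edgeSet) (heU : e ∉ P.uncolored) (hne : e ≠ s(a, b))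
      (hc : Conflict G s(b, q) e) : P.color s(a, b) ≠ P.color e := fun heq => by
    obtain ⟨c, ⟨d, rfl⟩, ⟨hbc, hcq⟩ | ⟨hqc, hcb⟩⟩ := (conflict_mk_iff he).1 hc
    · rcases eq_or_ne c a with rfl | hca
      · exact color_ne_color hab he (fun h : d = b => hne (by rw [h])) hU heU heq
      · rw [Sym2.eq_swap] at hU heq
        exact color_notMem_colorsAt hab.symm hU hbc hca (heq ▸ color_mem_colorsAt he heU)
    · exact hcb (eq_of_mem_leaves hq hqc)
  refine ⟨⟨P.color ∘ Equiv.swap s(a, b) s(b, q), P.uncolored, fun e e' he he' heU heU' hc => ?_⟩,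
    rfl, rfl⟩
  simp only [Function.comp_apply, Equiv.swap_apply_def]
  have := hc.1
  have := hc.symm
  have := P.proper he he' heU heU' hc
  grind

theorem colorsAt_of_swap {Q : PartialStrongColoring G k} {c : V} (hQU : Q.uncolored = P.uncolored)
    (hQ : Q.color = P.color ∘ Equiv.swap s(a, b) s(b, q)) (hab : G.Adj a b) (hbq : G.Adj b q)
    (hU : s(a, b) ∉ P.uncolored) (hU' : s(b, q) ∉ P.uncolored) (hca : c ≠ a) (hcq : c ≠ q) :
    Q.colorsAt c = P.colorsAt c := by
  simp only [colorsAt, hQU, hQ, ← Finset.image_image]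
  congr 1
  refine Finset.eq_of_subset_of_card_le (Finset.image_subset_iff.2 fun e he => ?_)
    (Finset.card_image_of_injective _ (Equiv.injective _)).ge
  simp only [Finset.mem_sdiff, mem_incidenceFinset_iff, Equiv.swap_apply_def] at he ⊢
  grind [SimpleGraph.mem_edgeSet]

end PartialStrongColoring

end Leaves

/-- A graph of maximum degree at most `Δ` without a strong `(3Δ - 3)`-edge-coloring all of whose
proper subgraphs on the same vertices have one. -/
structure MinimalCounterexample {V : Type*} [Fintype V] (G : SimpleGraph V) (Δ : ℕ) : Prop where
  nine_le : 9 ≤ Δ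
  degree_le : ∀ v, G.degree v ≤ Δ
  not_hasStrongColoring : ¬ HasStrongColoring G (3 * Δ - 3)
  hasStrongColoring_of_lt : ∀ H < G, HasStrongColoring H (3 * Δ - 3)

/-- The degrees of the neighbors of `v` sum to at least `3Δ - 2`; otherwise an edge from `v` to a
leaf could be colored greedily. -/
def Rich {V : Type*} [Fintype V] (G : SimpleGraph V) (Δ : ℕ) (v : V) : Prop :=
  3 * Δ - 2 ≤ ∑ w ∈ G.neighborFinset v, G.degree w

/-- The vertex `a` is light towards its neighbor `u`: it has degree two or three, and its neighbors
other than `u` have degree two. -/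
structure Light {V : Type*} [Fintype V] (G : SimpleGraph V) (a u : V) : Prop where
  adj : G.Adj a u
  two_le : 2 ≤ G.degree a
  le_three : G.degree a ≤ 3
  degree_eq_two : ∀ b, G.Adj a b → b ≠ u → G.degree b = 2

namespace Light

variable {V : Type*} [Fintype V] {G : SimpleGraph V} {a b u x y : V}

theorem coloredDegree_le_one {U : Finset (Sym2 V)} (hL : Light G a u) (hab : G.Adj a b)
    (hbu : b ≠ u) (hU : s(b, a) ∈ U) : coloredDegree G U b ≤ 1 := by
  have := coloredDegree_lt_degree hab.symm hU
  rw [hL.degree_eq_two b hab hbu] at this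
  omega

theorem sum_degree_erase_le (hL : Light G a u) (hab : G.Adj a b) (hbu : b ≠ u) :
    ∑ c ∈ (G.neighborFinset a).erase b, G.degree c ≤ G.degree u + 2 := by
  have hu : u ∈ (G.neighborFinset a).erase b := by simpa using ⟨hbu.symm, hL.adj⟩
  have hcard : #(((G.neighborFinset a).erase b).erase u) ≤ 1 := by
    have := hL.le_three
    rw [Finset.card_erase_of_mem hu, Finset.card_erase_of_mem (by simpa using hab),
      G.card_neighborFinset_eq_degree]
    omega
  rw [← Finset.add_sum_erase _ _ hu]
  gcongr
  refine (Finset.sum_le_card_nsmul _ _ 2 fun c hc => ?_).trans (by simpa using hcard)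
  simp only [Finset.mem_erase, SimpleGraph.mem_neighborFinset] at hc
  exact (hL.degree_eq_two c hc.2.2 hc.1).le

/-- `G` with the edges at `a` other than `au` removed. -/
def prune (G : SimpleGraph V) (a u : V) : SimpleGraph V :=
  G.deleteEdges ↑((G.incidenceFinset a).erase s(a, u))

theorem prune_adj_of_ne (ha : a ≠ x) (ha' : a ≠ y) : (prune G a u).Adj x y ↔ G.Adj x y := by
  simp only [prune, SimpleGraph.deleteEdges_adj, Finset.mem_coe, Finset.mem_erase,
    mem_incidenceFinset_iff, Sym2.mem_iff]
  grind

theorem prune_adj_left (hau : G.Adj a u) : (prune G a u).Adj a x ↔ x = u := by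
  simp only [prune, SimpleGraph.deleteEdges_adj, Finset.mem_coe, Finset.mem_erase,
    mem_incidenceFinset_iff, SimpleGraph.mem_edgeSet]
  grind

theorem mem_leaves_prune (hau : G.Adj a u) : a ∈ leaves (prune G a u) u := by
  rw [mem_leaves, SimpleGraph.degree_eq_one_iff_existsUnique_adj]
  exact ⟨((prune_adj_left hau).2 rfl).symm, u, (prune_adj_left hau).2 rfl,
    fun x hx => (prune_adj_left hau).1 hx⟩

/-- The edges that conflict with `au` through a neighbor of `a`. -/
noncomputable def outerEdges (G : SimpleGraph V) (a u : V) : Finset (Sym2 V) :=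
  ((G.neighborFinset a).erase u).biUnion fun b => G.incidenceFinset b \ G.incidenceFinset a

theorem card_outerEdges_le (hL : Light G a u) : #(outerEdges G a u) ≤ G.degree a - 1 := by
  refine (Finset.card_biUnion_le_card_mul _ _ 1 fun b hb => ?_).trans_eq ?_
  · rw [Finset.mem_erase, SimpleGraph.mem_neighborFinset] at hb
    exact hL.coloredDegree_le_one hb.2 hb.1
      (mem_incidenceFinset_iff.2 ⟨hb.2.symm, Sym2.mem_mk_right b a⟩)
  · rw [Finset.card_erase_of_mem (by simpa using hL.adj), G.card_neighborFinset_eq_degree, mul_one]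

end Light

/-- A coloring of `Light.prune G a u` as a coloring of `G` without the edges at `a`: the color of
`au` may conflict with edges joined to it by a deleted edge. -/
noncomputable def PartialStrongColoring.ofPrune {V : Type*} [Fintype V]
    {G : SimpleGraph V} {a u : V} {k : ℕ} {C : Sym2 V → Fin k}
    (hC : IsStrongColoring (Light.prune G a u) C) : PartialStrongColoring G k :=
  .ofDeleteEdges (U := G.incidenceFinset a) hC (Finset.erase_subset _ _) fun _ he =>
    ⟨a, (mem_incidenceFinset_iff.1 (Finset.mem_of_mem_erase he)).2, subset_rfl⟩

namespace MinimalCounterexample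

open PartialStrongColoring

variable {V : Type*} [Fintype V] {G : SimpleGraph V} {Δ : ℕ} {a u v q : V} {e : Sym2 V}

theorem uncolored_ne_empty (M : MinimalCounterexample G Δ)
    (P : PartialStrongColoring G (3 * Δ - 3)) : P.uncolored ≠ ∅ :=
  fun h => M.not_hasStrongColoring ⟨P.color, P.isStrongColoring h⟩

theorem hasStrongColoring_deleteEdges (M : MinimalCounterexample G Δ) {T : Finset (Sym2 V)}
    (heT : e ∈ T) (he : e ∈ G.edgeSet) : HasStrongColoring (G.deleteEdges T) (3 * Δ - 3) := by
  refine M.hasStrongColoring_of_lt _ ((G.deleteEdges_le _).lt_of_ne fun h => ?_)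
  rw [← h, SimpleGraph.edgeSet_deleteEdges] at he
  exact he.2 heT

theorem exists_uncolored_eq (M : MinimalCounterexample G Δ) {T : Finset (Sym2 V)} (heT : e ∈ T)
    (hT : ∀ e ∈ T, ∃ q ∈ leaves G v, e = s(v, q)) :
    ∃ P : PartialStrongColoring G (3 * Δ - 3), P.uncolored = T := by
  obtain ⟨q, hq, rfl⟩ := hT e heT
  obtain ⟨C, hC⟩ := M.hasStrongColoring_deleteEdges heT (mem_leaves.1 hq).1
  refine ⟨.ofDeleteEdges hC subset_rfl fun e he => ?_, rfl⟩
  obtain ⟨r, hr, rfl⟩ := hT e he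
  refine ⟨r, Sym2.mem_mk_right v r, fun f hf => ?_⟩
  obtain ⟨hfG, w, rfl⟩ := mem_incidenceFinset_iff.1 hf
  rwa [show w = v from eq_of_mem_leaves hr hfG, Sym2.eq_swap]

theorem rich_of_mem_leaves (M : MinimalCounterexample G Δ) (hq : q ∈ leaves G v) :
    Rich G Δ v := by
  by_contra hrich
  rw [Rich, not_le] at hrich
  obtain ⟨hvq, hq1⟩ := mem_leaves.1 hq
  obtain ⟨P, hP⟩ := M.exists_uncolored_eq (Finset.mem_singleton_self s(v, q)) fun e he =>
    ⟨q, hq, Finset.mem_singleton.1 he⟩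
  obtain ⟨Q, -, hQ⟩ := P.exists_extend_of_sum_lt {s(v, q)} fun e he => by
    refine ⟨v, q, Finset.mem_singleton.1 he, ?_⟩
    have hsum := Finset.sum_erase_add _ (fun w => G.degree w) ((G.mem_neighborFinset v q).2 hvq)
    have hle := Finset.sum_le_sum fun c (_ : c ∈ (G.neighborFinset v).erase q) =>
      coloredDegree_le_degree (U := P.uncolored \ {s(v, q)}) (G := G) (c := c)
    rw [neighborFinset_erase_of_mem_leaves hq, Finset.sum_empty]
    omega
  exact M.uncolored_ne_empty Q (by rw [hQ, hP, Finset.sdiff_self])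

theorem uncolored_ne_of_light (M : MinimalCounterexample G Δ) (hL : Light G a u)
    (P : PartialStrongColoring G (3 * Δ - 3)) :
    P.uncolored ≠ (G.incidenceFinset a).erase s(a, u) := by
  intro hP
  obtain ⟨Q, -, hQ⟩ := P.exists_extend_of_sum_lt _ fun e (he : e ∈ P.uncolored) => by
    rw [hP] at he
    obtain ⟨hne, he⟩ := Finset.mem_erase.1 he
    obtain ⟨hab, b, rfl⟩ := mem_incidenceFinset_iff.1 he
    have hbu : b ≠ u := fun h => hne (by rw [h])
    replace hab : G.Adj a b := hab
    refine ⟨a, b, rfl, ?_⟩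
    rw [Finset.sdiff_self]
    have ha : ∑ c ∈ (G.neighborFinset a).erase b, coloredDegree G ∅ c ≤ G.degree u + 2 :=
      (Finset.sum_le_sum fun c _ => coloredDegree_le_degree).trans (hL.sum_degree_erase_le hab hbu)
    have hb : ∑ c ∈ (G.neighborFinset b).erase a, coloredDegree G ∅ c ≤ Δ := by
      have hcard : #((G.neighborFinset b).erase a) = 1 := by
        rw [Finset.card_erase_of_mem (by simpa using hab.symm), G.card_neighborFinset_eq_degree,
          hL.degree_eq_two b hab hbu]
      simpa [hcard] using Finset.sum_le_card_nsmul ((G.neighborFinset b).erase a) _ Δ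
        fun c _ => coloredDegree_le_degree.trans (M.degree_le c)
    have := M.nine_le
    have := M.degree_le u
    omega
  exact M.uncolored_ne_empty Q (by rw [hQ, Finset.sdiff_self])

theorem hasStrongColoring_prune (M : MinimalCounterexample G Δ) (hL : Light G a u) :
    HasStrongColoring (Light.prune G a u) (3 * Δ - 3) := by
  have hcard : 1 < #(G.incidenceFinset a) := by
    rw [G.card_incidenceFinset_eq_degree]
    exact hL.two_le
  obtain ⟨e, he, hne⟩ := Finset.exists_mem_ne hcard s(a, u)
  exact M.hasStrongColoring_deleteEdges (Finset.mem_erase.2 ⟨hne, he⟩)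
    (mem_incidenceFinset_iff.1 he).1

theorem rich_of_light (M : MinimalCounterexample G Δ) (hL : Light G a u) : Rich G Δ u := by
  by_contra hrich
  rw [Rich, not_le] at hrich
  obtain ⟨C, hC⟩ := M.hasStrongColoring_prune hL
  set P := PartialStrongColoring.ofPrune hC
  set U := P.uncolored \ {s(a, u)} with hU
  obtain ⟨Q, -, hQ⟩ := P.exists_extend_of_sum_lt {s(a, u)} fun e he => by
    refine ⟨a, u, Finset.mem_singleton.1 he, ?_⟩
    rw [← hU]
    have ha : ∑ c ∈ (G.neighborFinset a).erase u, coloredDegree G U c ≤ G.degree a - 1 := by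
      rw [← G.card_neighborFinset_eq_degree, ← Finset.card_erase_of_mem (by simpa using hL.adj)]
      refine (Finset.sum_le_card_nsmul _ _ 1 fun c hc => ?_).trans_eq (by simp)
      rw [Finset.mem_erase, SimpleGraph.mem_neighborFinset] at hc
      refine hL.coloredDegree_le_one hc.2 hc.1 (Finset.mem_sdiff.2
        ⟨mem_incidenceFinset_iff.2 ⟨hc.2.symm, Sym2.mem_mk_right c a⟩, ?_⟩)
      simp [hc.1, hc.2.ne']
    have hu := Finset.sum_le_sum fun c (_ : c ∈ (G.neighborFinset u).erase a) =>
      coloredDegree_le_degree (U := U) (G := G) (c := c)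
    have hsum := Finset.sum_erase_add _ (fun w => G.degree w)
      ((G.mem_neighborFinset u a).2 hL.adj.symm)
    have := hL.two_le
    omega
  exact M.uncolored_ne_of_light hL Q (by rw [hQ, Finset.sdiff_singleton_eq_erase]; rfl)

theorem exists_color_eq_of_light (M : MinimalCounterexample G Δ) (hL : Light G a u)
    {C : Sym2 V → Fin (3 * Δ - 3)} (hC : IsStrongColoring (Light.prune G a u) C) :
    ∃ e ∈ Light.outerEdges G a u, C e = C s(a, u) := by
  by_contra! hne
  set P := PartialStrongColoring.ofPrune hC
  have hnotMem {x y : V} (hxy : G.Adj x y) (hU : s(x, y) ∉ P.uncolored) : a ≠ x ∧ a ≠ y := by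
    simpa using mt (fun h => mem_incidenceFinset_iff.2 ⟨hxy, Sym2.mem_iff.2 h⟩) hU
  have hγ : C s(a, u) ∉ P.forbidden a u := by
    rw [mem_forbidden]
    rintro (⟨c, hcu, hac, hmem⟩ | ⟨c, hca, huc, hmem⟩)
      <;> obtain ⟨d, hcd, hU, heq⟩ := mem_colorsAt.1 hmem
    · refine hne s(c, d) (Finset.mem_biUnion.2 ⟨c, by simpa using ⟨hcu, hac⟩, ?_⟩) heq
      exact Finset.mem_sdiff.2 ⟨mem_incidenceFinset_iff.2 ⟨hcd, Sym2.mem_mk_left c d⟩, hU⟩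
    · have hcd' := (Light.prune_adj_of_ne (u := u) (hnotMem hcd hU).1 (hnotMem hcd hU).2).2 hcd
      have huc' := (Light.prune_adj_of_ne (u := u) hL.adj.ne hca.symm).2 huc
      have hau := (Light.prune_adj_left hL.adj).2 rfl
      exact hC _ hau _ hcd' ((conflict_mk_iff hcd').2
        ⟨c, Sym2.mem_mk_left c d, .inr ⟨huc', hca⟩⟩) heq.symm
  obtain ⟨Q, -, hQ, -⟩ := exists_extend hγ
    (mem_incidenceFinset_iff.2 ⟨hL.adj, Sym2.mem_mk_left a u⟩)
  exact M.uncolored_ne_of_light hL Q hQ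

theorem exists_color_eq_of_mem_leaves (M : MinimalCounterexample G Δ) (hL : Light G a u)
    {C : Sym2 V → Fin (3 * Δ - 3)} (hC : IsStrongColoring (Light.prune G a u) C)
    (hq : q ∈ leaves G u) : ∃ e ∈ Light.outerEdges G a u, C e = C s(u, q) := by
  have haq : a ≠ q := by
    rintro rfl
    have := hL.two_le
    have := (mem_leaves.1 hq).2
    omega
  have hqu := (Light.prune_adj_of_ne (u := u) haq hL.adj.ne).2 (mem_leaves.1 hq).1.symm
  have eq_u {c} (hc : (Light.prune G a u).Adj q c) : c = u :=
    eq_of_mem_leaves hq (G.deleteEdges_le _ hc)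
  obtain ⟨Q, hQU, hQ⟩ := exists_swap (P := ⟨C, ∅, fun e e' he he' _ _ => hC e he e' he'⟩) hqu
    (Light.mem_leaves_prune hL.adj) (Finset.notMem_empty _) (Finset.notMem_empty _)
    fun c hc hcu => absurd (eq_u hc) hcu
  obtain ⟨e, he, heq⟩ := M.exists_color_eq_of_light hL (Q.isStrongColoring hQU)
  refine ⟨e, he, ?_⟩
  obtain ⟨b, hb, heb⟩ := Finset.mem_biUnion.1 he
  rw [Finset.mem_erase, SimpleGraph.mem_neighborFinset] at hb
  have hb2 := hL.degree_eq_two b hb.2 hb.1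
  have hq1 := (mem_leaves.1 hq).2
  simp only [Finset.mem_sdiff, mem_incidenceFinset_iff] at heb
  have hne : e ≠ s(q, u) := by grind
  have hne' : e ≠ s(u, a) := by grind [hL.adj.symm, SimpleGraph.mem_edgeSet]
  simp only [hQ, Function.comp_apply, Equiv.swap_apply_of_ne_of_ne hne hne'] at heq
  rw [heq, Sym2.eq_swap (a := a), Equiv.swap_apply_right, Sym2.eq_swap]

theorem card_leaves_le_one (M : MinimalCounterexample G Δ) (hL : Light G a u) :
    #(leaves G u) ≤ 1 := by
  by_contra! hlt
  obtain ⟨q, hq, r, hr, hqr⟩ := Finset.one_lt_card.1 hlt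
  obtain ⟨C, hC⟩ := M.hasStrongColoring_prune hL
  obtain ⟨e, he, hea⟩ := M.exists_color_eq_of_light hL hC
  obtain ⟨f, hf, hfq⟩ := M.exists_color_eq_of_mem_leaves hL hC hq
  obtain ⟨g, hg, hgr⟩ := M.exists_color_eq_of_mem_leaves hL hC hr
  have ne_leaf {p} (hp : p ∈ leaves G u) : a ≠ p := by
    rintro rfl
    have := hL.two_le
    have := (mem_leaves.1 hp).2
    omega
  have color_ne {x y} (hx : (Light.prune G a u).Adj u x) (hy : (Light.prune G a u).Adj u y)
      (hxy : y ≠ x) : C s(u, x) ≠ C s(u, y) :=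
    hC _ hx _ hy ((conflict_mk_iff hy).2 ⟨y, Sym2.mem_mk_right u y, .inl ⟨hy, hxy⟩⟩)
  have hua := ((Light.prune_adj_left hL.adj).2 rfl).symm
  have adj_leaf {p} (hp : p ∈ leaves G u) : (Light.prune G a u).Adj u p :=
    (Light.prune_adj_of_ne hL.adj.ne (ne_leaf hp)).2 (mem_leaves.1 hp).1
  have hef : e ≠ f := fun h => color_ne hua (adj_leaf hq) (ne_leaf hq).symm (by
    rw [← hfq, ← h, hea, Sym2.eq_swap])
  have heg : e ≠ g := fun h => color_ne hua (adj_leaf hr) (ne_leaf hr).symm (by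
    rw [← hgr, ← h, hea, Sym2.eq_swap])
  have hfg : f ≠ g := fun h => color_ne (adj_leaf hq) (adj_leaf hr) hqr.symm (by
    rw [← hfq, h, hgr])
  have hsub : {e, f, g} ⊆ Light.outerEdges G a u := by
    simp only [Finset.insert_subset_iff, Finset.singleton_subset_iff]
    exact ⟨he, hf, hg⟩
  have hcard := (Finset.card_le_card hsub).trans hL.card_outerEdges_le
  rw [Finset.card_eq_three.2 ⟨e, f, g, hef, heg, hfg, rfl⟩] at hcard
  have := hL.le_three
  omega

end MinimalCounterexample

theorem sum_le_of_subset_triple {α : Type*} {s : Finset α} {x y w : α} (f : α → ℕ)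
    (h : s ⊆ {x, y, w}) : ∑ c ∈ s, f c ≤ f x + f y + f w := by
  have sum_insert_le (c : α) (t : Finset α) : ∑ d ∈ insert c t, f d ≤ f c + ∑ d ∈ t, f d := by
    by_cases hc : c ∈ t
    · rw [Finset.insert_eq_of_mem hc]
      omega
    · rw [Finset.sum_insert hc]
  calc
    ∑ c ∈ s, f c ≤ ∑ c ∈ {x, y, w}, f c := Finset.sum_le_sum_of_subset h
    _ ≤ f x + (f y + f w) :=
      (sum_insert_le x _).trans (add_le_add le_rfl ((sum_insert_le y _).trans (by simp)))
    _ = f x + f y + f w := (add_assoc _ _ _).symm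

section Fat

variable {V : Type*} [Fintype V] {G : SimpleGraph V} {Δ k : ℕ} {u v w x y q : V}
  {U : Finset (Sym2 V)} {e : Sym2 V}

/-- The edges joining `v` to its leaves. -/
noncomputable def pendantEdges (G : SimpleGraph V) (v : V) : Finset (Sym2 V) :=
  (leaves G v).image fun q => s(v, q)

theorem mem_pendantEdges : e ∈ pendantEdges G v ↔ ∃ q ∈ leaves G v, e = s(v, q) := by
  simp only [pendantEdges, Finset.mem_image, eq_comm]

theorem mk_mem_pendantEdges : s(v, q) ∈ pendantEdges G v ↔ q ∈ leaves G v := by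
  rw [mem_pendantEdges]
  exact ⟨fun ⟨r, hr, h⟩ => Sym2.congr_right.1 h ▸ hr, fun h => ⟨q, h, rfl⟩⟩

theorem eq_of_mem_pendantEdges (he : e ∈ pendantEdges G v) (hx : x ∈ e) (hdeg : 2 ≤ G.degree x) :
    x = v := by
  obtain ⟨q, hq, rfl⟩ := mem_pendantEdges.1 he
  rcases Sym2.mem_iff.1 hx with rfl | rfl
  · rfl
  · have := (mem_leaves.1 hq).2
    omega

theorem disjoint_pendantEdges (huv : u ≠ v) (hdeg : 2 ≤ G.degree u) :
    Disjoint (pendantEdges G u) (pendantEdges G v) := by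
  refine Finset.disjoint_left.2 fun e hu hv => huv (eq_of_mem_pendantEdges hv ?_ hdeg)
  obtain ⟨q, -, rfl⟩ := mem_pendantEdges.1 hu
  exact Sym2.mem_mk_left u q

theorem sum_neighborFinset_eq (v : V) (f : V → ℕ) :
    ∑ c ∈ G.neighborFinset v, f c = ∑ c ∈ leaves G v, f c + ∑ c ∈ coreNeighbors G v, f c := by
  have hleaves : leaves G v = {w ∈ G.neighborFinset v | ¬ 2 ≤ G.degree w} := by
    refine Finset.filter_congr fun w hw => ?_
    have := (G.degree_pos_iff_exists_adj w).2 ⟨v, ((G.mem_neighborFinset v w).1 hw).symm⟩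
    omega
  rw [hleaves, coreNeighbors, Finset.sum_filter_not_add_sum_filter]

theorem card_leaves_add_card_coreNeighbors (v : V) :
    #(leaves G v) + #(coreNeighbors G v) = G.degree v := by
  simpa using (sum_neighborFinset_eq v fun _ => 1).symm

theorem sum_leaves_coloredDegree (v : V) :
    ∑ q ∈ leaves G v, coloredDegree G U q = #(pendantEdges G v \ U) := by
  have hq : ∀ q ∈ leaves G v, coloredDegree G U q = if s(v, q) ∉ U then 1 else 0 := by
    intro q hq
    have : G.incidenceFinset q = {s(v, q)} := by
      ext e
      rw [mem_incidenceFinset_iff, Finset.mem_singleton]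
      constructor
      · rintro ⟨he, w, rfl⟩
        rw [show w = v from eq_of_mem_leaves hq he, Sym2.eq_swap]
      · rintro rfl
        exact ⟨(mem_leaves.1 hq).1, Sym2.mem_mk_right v q⟩
    rw [coloredDegree, this]
    by_cases h : s(v, q) ∈ U
    · simp [h]
    · simp [h, Finset.sdiff_eq_self_of_disjoint (Finset.disjoint_singleton_left.2 h)]
  rw [Finset.sum_congr rfl hq, ← Finset.card_filter, pendantEdges, ← Finset.filter_notMem_eq_sdiff,
    Finset.filter_image, Finset.card_image_of_injective _ fun _ _ => Sym2.congr_right.1]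

theorem coloredDegree_le_card_coreNeighbors (h : pendantEdges G v ⊆ U) :
    coloredDegree G U v ≤ #(coreNeighbors G v) := by
  refine (Finset.card_le_card fun e he => ?_).trans
    (Finset.card_image_le (s := coreNeighbors G v) (f := fun w => s(v, w)))
  rw [Finset.mem_sdiff, mem_incidenceFinset_iff] at he
  obtain ⟨⟨hadj, w, rfl⟩, hU⟩ := he
  refine Finset.mem_image_of_mem _
    ((mem_leaves_or_mem_coreNeighbors hadj).resolve_left fun hw => ?_)
  exact hU (h (mk_mem_pendantEdges.2 hw))

theorem sum_erase_coloredDegree_le (hv : v ∈ coreNeighbors G u)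
    (hcore : coreNeighbors G u ⊆ {v, x, y}) :
    ∑ c ∈ (G.neighborFinset u).erase v, coloredDegree G U c ≤
      #(pendantEdges G u \ U) + coloredDegree G U x + coloredDegree G U y := by
  have hsum := sum_neighborFinset_eq (G := G) u (coloredDegree G U)
  have hcoreSum := sum_le_of_subset_triple (coloredDegree G U) hcore
  rw [← Finset.add_sum_erase _ _ hv] at hcoreSum
  rw [sum_leaves_coloredDegree, ← Finset.add_sum_erase _ _ hv, ← Finset.add_sum_erase _ _
    ((G.mem_neighborFinset u v).2 (mem_coreNeighbors.1 hv).1)] at hsum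
  omega

/-- The core neighbors of `v` are `u` and `w`, both of the maximal degree `Δ`, and `v` has a
leaf. -/
structure Fat (G : SimpleGraph V) (Δ : ℕ) (v u w : V) : Prop where
  ne : u ≠ w
  coreNeighbors_eq : coreNeighbors G v = {u, w}
  leaves_nonempty : (leaves G v).Nonempty
  degree_left : G.degree u = Δ
  degree_right : G.degree w = Δ

namespace Fat

theorem symm (F : Fat G Δ v u w) : Fat G Δ v w u where
  ne := F.ne.symm
  coreNeighbors_eq := F.coreNeighbors_eq.trans (Finset.pair_comm u w)
  leaves_nonempty := F.leaves_nonempty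
  degree_left := F.degree_right
  degree_right := F.degree_left

theorem adj_left (F : Fat G Δ v u w) : G.Adj v u :=
  (mem_coreNeighbors.1 (F.coreNeighbors_eq ▸ Finset.mem_insert_self u {w})).1

theorem two_le_degree_left (F : Fat G Δ v u w) : 2 ≤ G.degree u :=
  (mem_coreNeighbors.1 (F.coreNeighbors_eq ▸ Finset.mem_insert_self u {w})).2

theorem card_leaves (F : Fat G Δ v u w) : #(leaves G v) + 2 = G.degree v := by
  rw [← card_leaves_add_card_coreNeighbors, F.coreNeighbors_eq, Finset.card_pair F.ne]

theorem eq_or_eq_or_mem_leaves (F : Fat G Δ v u w) (h : G.Adj v x) :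
    x = u ∨ x = w ∨ x ∈ leaves G v := by
  have := mem_leaves_or_mem_coreNeighbors h
  rw [F.coreNeighbors_eq] at this
  simp only [Finset.mem_insert, Finset.mem_singleton] at this
  tauto

theorem coloredDegree_le_two (F : Fat G Δ v u w) (h : pendantEdges G v ⊆ U) :
    coloredDegree G U v ≤ 2 :=
  (coloredDegree_le_card_coreNeighbors h).trans_eq
    (by rw [F.coreNeighbors_eq, Finset.card_pair F.ne])

end Fat

namespace PartialStrongColoring

variable {P : PartialStrongColoring G k} {γ : Fin k}

theorem exists_extend_pendantEdges_of_common_color {P : PartialStrongColoring G (3 * Δ - 3)}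
    {γ : Fin (3 * Δ - 3)} (F : Fat G Δ v u w) (hdeg : G.degree v ≤ Δ)
    (hu : γ ∈ P.colorsAt u) (hw : γ ∈ P.colorsAt w) :
    ∃ Q ≥ P, Q.uncolored = P.uncolored \ pendantEdges G v := by
  refine exists_extend_of_forall _ fun Q hPQ _ e he _ => ?_
  obtain ⟨q, hq, rfl⟩ := mem_pendantEdges.1 he
  refine ⟨v, q, rfl, ?_⟩
  have hsub : Q.forbidden v q ⊆
      (Q.colorsAt u ∪ Q.colorsAt w) ∪ ((leaves G v).erase q).biUnion Q.colorsAt := by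
    intro ρ hρ
    obtain ⟨c, hcq, hvc, hc⟩ := (mem_forbidden_of_mem_leaves hq).1 hρ
    simp only [Finset.mem_union, Finset.mem_biUnion, Finset.mem_erase]
    rcases F.eq_or_eq_or_mem_leaves hvc with rfl | rfl | hcl
    exacts [.inl (.inl hc), .inl (.inr hc), .inr ⟨c, ⟨hcq, hcl⟩, hc⟩]
  have hleaves : #(((leaves G v).erase q).biUnion Q.colorsAt) ≤ #((leaves G v).erase q) :=
    (Finset.card_biUnion_le_card_mul _ _ 1 fun c hc => (Q.card_colorsAt_le c).trans <|
      coloredDegree_le_degree.trans (mem_leaves.1 (Finset.mem_of_mem_erase hc)).2.le).trans_eq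
        (mul_one _)
  have hcommon : 0 < #(Q.colorsAt u ∩ Q.colorsAt w) := Finset.card_pos.2 ⟨γ, Finset.mem_inter.2
    ⟨colorsAt_subset_of_le hPQ hu, colorsAt_subset_of_le hPQ hw⟩⟩
  have hcard := Finset.card_union_add_card_inter (Q.colorsAt u) (Q.colorsAt w)
  have hule := (Q.card_colorsAt_le u).trans (coloredDegree_le_degree.trans F.degree_left.le)
  have hwle := (Q.card_colorsAt_le w).trans (coloredDegree_le_degree.trans F.degree_right.le)
  have := (Finset.card_le_card hsub).trans (Finset.card_union_le _ _)
  have := F.card_leaves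
  have := F.leaves_nonempty.card_pos
  rw [Finset.card_erase_of_mem hq] at hleaves
  omega

theorem exists_extend_left (F : Fat G Δ v u w) {P : PartialStrongColoring G (3 * Δ - 3)}
    (hpend : pendantEdges G v ⊆ P.uncolored) (huv : s(u, v) ∈ P.uncolored) (hΔ : 2 ≤ Δ)
    (hsum : ∑ c ∈ (G.neighborFinset u).erase v, coloredDegree G P.uncolored c ≤ 2 * Δ - 4) :
    ∃ Q ≥ P, Q.uncolored = P.uncolored.erase s(u, v) := by
  refine exists_extend_of_card_lt huv ((P.card_forbidden_le u v).trans_lt ?_)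
  have hv : ∑ c ∈ (G.neighborFinset v).erase u, coloredDegree G P.uncolored c ≤ Δ := by
    have hleaves := sum_leaves_coloredDegree (G := G) (U := P.uncolored) v
    rw [Finset.sdiff_eq_empty_iff_subset.2 hpend, Finset.card_empty] at hleaves
    have hsum := sum_neighborFinset_eq (G := G) v (coloredDegree G P.uncolored)
    rw [F.coreNeighbors_eq, Finset.sum_pair F.ne, hleaves,
      ← Finset.add_sum_erase _ _ ((G.mem_neighborFinset v u).2 F.adj_left)] at hsum
    have := (coloredDegree_le_degree (U := P.uncolored)).trans F.degree_right.le
    omega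
  omega

theorem exists_extend_pendantEdges {P : PartialStrongColoring G (3 * Δ - 3)}
    (hΔ : 7 ≤ Δ) (hdeg : ∀ c, G.degree c ≤ Δ) (hcore : coreNeighbors G u ⊆ {v, x, y})
    (hv : coloredDegree G (P.uncolored \ pendantEdges G u) v ≤ 2)
    (hx : coloredDegree G (P.uncolored \ pendantEdges G u) x ≤ 2) :
    ∃ Q ≥ P, Q.uncolored = P.uncolored \ pendantEdges G u := by
  refine exists_extend_of_sum_lt _ fun e he => ?_
  obtain ⟨q, hq, rfl⟩ := mem_pendantEdges.1 he
  refine ⟨u, q, rfl, ?_⟩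
  rw [neighborFinset_erase_of_mem_leaves hq, Finset.sum_empty, add_zero]
  set cd := coloredDegree G (P.uncolored \ pendantEdges G u)
  have hsum := sum_neighborFinset_eq (G := G) u cd
  rw [← Finset.add_sum_erase _ _ ((G.mem_neighborFinset u q).2 (mem_leaves.1 hq).1),
    ← Finset.add_sum_erase (leaves G u) _ hq, add_assoc, add_right_inj] at hsum
  have hleaves : ∑ c ∈ (leaves G u).erase q, cd c ≤ #(leaves G u) - 1 := by
    rw [← Finset.card_erase_of_mem hq, ← mul_one #(_), ← smul_eq_mul]
    refine Finset.sum_le_card_nsmul _ _ _ fun c hc => coloredDegree_le_degree.trans ?_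
    exact (mem_leaves.1 (Finset.mem_of_mem_erase hc)).2.le
  have hcoreSum := sum_le_of_subset_triple cd hcore
  have hy : cd y ≤ Δ := coloredDegree_le_degree.trans (hdeg y)
  have := card_leaves_add_card_coreNeighbors (G := G) u
  have := hdeg u
  omega

theorem exists_extend_of_common_color {P : PartialStrongColoring G (3 * Δ - 3)}
    {γ : Fin (3 * Δ - 3)} (hΔ : 8 ≤ Δ) (hdeg : ∀ c, G.degree c ≤ Δ) (F : Fat G Δ v u w)
    (hcore : coreNeighbors G u ⊆ {v, x, y})
    (hpend : pendantEdges G v ⊆ P.uncolored) (huv : s(u, v) ∈ P.uncolored)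
    (hleaves : #(pendantEdges G u \ P.uncolored) ≤ 2)
    (hx : coloredDegree G (P.uncolored \ insert s(u, v) (pendantEdges G u)) x ≤ 2)
    (hu : γ ∈ P.colorsAt u) (hw : γ ∈ P.colorsAt w) :
    ∃ Q ≥ P, Q.uncolored =
      P.uncolored \ (insert s(u, v) (pendantEdges G u) ∪ pendantEdges G v) := by
  have hv2 := F.card_leaves
  obtain ⟨Q, hPQ, hQ⟩ := exists_extend_left F hpend huv (by omega) (by
    have hmem : v ∈ coreNeighbors G u := mem_coreNeighbors.2 ⟨F.adj_left.symm, by omega⟩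
    have hsum := sum_erase_coloredDegree_le (U := P.uncolored) hmem hcore
    have hx := (coloredDegree_anti Finset.sdiff_subset).trans hx
    have hy := (coloredDegree_le_degree (U := P.uncolored)).trans (hdeg y)
    omega)
  have hdisj : Disjoint (pendantEdges G v) (pendantEdges G u) :=
    disjoint_pendantEdges F.adj_left.ne (by omega)
  have hpendQ : pendantEdges G v ⊆ Q.uncolored := by
    rw [hQ, Finset.subset_erase]
    exact ⟨hpend, fun h => F.adj_left.ne (eq_of_mem_pendantEdges h (by simp)
      F.two_le_degree_left).symm⟩
  have hsdiff : Q.uncolored \ pendantEdges G u =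
      P.uncolored \ insert s(u, v) (pendantEdges G u) := by
    rw [hQ, Finset.erase_sdiff_comm, Finset.sdiff_insert]
  obtain ⟨R, hQR, hR⟩ := exists_extend_pendantEdges (P := Q) (by omega) hdeg hcore
    (F.coloredDegree_le_two (Finset.subset_sdiff.2 ⟨hpendQ, hdisj⟩)) (by rwa [hsdiff])
  have hPR := hPQ.trans hQR
  obtain ⟨S, hRS, hS⟩ := exists_extend_pendantEdges_of_common_color F (hdeg v)
    (colorsAt_subset_of_le hPR hu) (colorsAt_subset_of_le hPR hw)
  exact ⟨S, hPR.trans hRS, by rw [hS, hR, hsdiff, sdiff_sdiff_left, Finset.sup_eq_union]⟩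

theorem exists_leaf_color_notMem {A : Finset (Fin k)} (hA : #A ≤ #(leaves G w)) (hwv : G.Adj w v)
    (hv : v ∉ leaves G w) (hw : ∀ b, G.Adj w b → s(w, b) ∉ P.uncolored)
    (hvA : P.color s(w, v) ∈ A) : ∃ r ∈ leaves G w, P.color s(w, r) ∉ A := by
  by_contra! hall
  have color_ne {b c : V} (hb : G.Adj w b) (hc : G.Adj w c) (hcb : c ≠ b) :
      P.color s(w, b) ≠ P.color s(w, c) := color_ne_color hb hc hcb (hw b hb) (hw c hc)
  have hnew : P.color s(w, v) ∉ (leaves G w).image fun r => P.color s(w, r) := by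
    simp only [Finset.mem_image, not_exists, not_and]
    exact fun r hr => color_ne (mem_leaves.1 hr).1 hwv (ne_of_mem_of_not_mem hr hv).symm
  have hinj : Set.InjOn (fun r => P.color s(w, r)) (leaves G w) := fun r hr r' hr' heq =>
    by_contra fun hne => color_ne (mem_leaves.1 hr).1 (mem_leaves.1 hr').1 (Ne.symm hne) heq
  have hsub : insert (P.color s(w, v)) ((leaves G w).image fun r => P.color s(w, r)) ⊆ A :=
    Finset.insert_subset hvA (Finset.image_subset_iff.2 hall)
  have hcard := Finset.card_le_card hsub
  rw [Finset.card_insert_of_notMem hnew, Finset.card_image_of_injOn hinj] at hcard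
  omega

theorem exists_recolor (F : Fat G Δ v u w) (A : Finset (Fin k)) (hA : #A ≤ #(leaves G w))
    (hcommon : P.colorsAt u ∩ P.colorsAt w ⊆ A) (hpend : pendantEdges G v ⊆ P.uncolored)
    (hw : ∀ b, G.Adj w b → s(w, b) ∉ P.uncolored) :
    ∃ Q : PartialStrongColoring G k, Q.uncolored = P.uncolored ∧ Q.color s(v, w) ∉ A ∧
      (∀ e, v ∉ e → e ∉ pendantEdges G w → Q.color e = P.color e) ∧
      ∀ c, c ≠ v → c ∉ leaves G w → Q.colorsAt c = P.colorsAt c := by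
  by_cases hvw : P.color s(v, w) ∉ A
  · exact ⟨P, rfl, hvw, fun _ _ _ => rfl, fun _ _ _ => rfl⟩
  rw [not_not] at hvw
  have hadj := F.symm.adj_left
  have hU := hw v hadj.symm
  obtain ⟨r, hr, hrA⟩ := exists_leaf_color_notMem hA hadj.symm (fun h => by
    have := F.card_leaves
    have := (mem_leaves.1 h).2
    omega) hw (Sym2.eq_swap ▸ hvw)
  have hwr := (mem_leaves.1 hr).1
  rw [Sym2.eq_swap] at hU
  obtain ⟨Q, hQU, hQ⟩ := exists_swap hadj hr hU (hw r hwr) fun c hvc hcw hc => by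
    rcases F.eq_or_eq_or_mem_leaves hvc with rfl | rfl | hcl
    · exact hrA (hcommon (Finset.mem_inter.2 ⟨hc, color_mem_colorsAt hwr (hw r hwr)⟩))
    · exact hcw rfl
    · obtain ⟨d, hcd, hcdU, -⟩ := mem_colorsAt.1 hc
      rw [show d = v from eq_of_mem_leaves hcl hcd, Sym2.eq_swap] at hcdU
      exact hcdU (hpend (mk_mem_pendantEdges.2 hcl))
  refine ⟨Q, hQU, ?_, fun e hve hew => ?_, fun c hcv hcw => ?_⟩
  · simpa only [hQ, Function.comp_apply, Equiv.swap_apply_left] using hrA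
  · rw [hQ, Function.comp_apply, Equiv.swap_apply_of_ne_of_ne]
    · rintro rfl
      exact hve (Sym2.mem_mk_left v w)
    · rintro rfl
      exact hew (mk_mem_pendantEdges.2 hr)
  · exact colorsAt_of_swap hQU hQ hadj hwr hU (hw r hwr) hcv fun h => hcw (h ▸ hr)

theorem exists_color_pendant (hq : q ∈ leaves G u) (hU : s(u, q) ∈ P.uncolored)
    (hγ : ∀ c ∈ coreNeighbors G u, γ ∈ P.colorsAt c → γ ∈ P.colorsAt u) :
    ∃ Q ≥ P, γ ∈ Q.colorsAt u ∧ P.uncolored.erase s(u, q) ⊆ Q.uncolored ∧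
      ∀ c, c ≠ u → c ≠ q → Q.colorsAt c = P.colorsAt c := by
  by_cases hu : γ ∈ P.colorsAt u
  · exact ⟨P, le_rfl, hu, Finset.erase_subset _ _, fun _ _ _ => rfl⟩
  obtain ⟨Q, hPQ, hQ, hcolor⟩ := exists_extend (a := u) (b := q) (γ := γ) (P := P) (by
    rw [mem_forbidden_of_mem_leaves hq]
    rintro ⟨c, -, huc, hc⟩
    rcases mem_leaves_or_mem_coreNeighbors huc with hcl | hcc
    · exact hu (colorsAt_subset_of_mem_leaves hcl hc)
    · exact hu (hγ c hcc hc)) hU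
  refine ⟨Q, hPQ, ?_, hQ.ge, fun c hcu hcq => colorsAt_eq_of_le hPQ fun b _ hb => ?_⟩
  · exact hcolor ▸ color_mem_colorsAt (mem_leaves.1 hq).1 (by simp [hQ])
  · rw [hQ, Finset.mem_erase]
    refine ⟨fun h => ?_, hb⟩
    have hc : c ∈ s(u, q) := by
      rw [← h]
      exact Sym2.mem_mk_left c b
    exact (Sym2.mem_iff.1 hc).elim hcu hcq

end PartialStrongColoring

end Fat

section SharedFat

variable {V : Type*} [Fintype V] {G : SimpleGraph V} {Δ k : ℕ} {u v w x y q : V}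
  {U U' : Finset (Sym2 V)}

namespace PartialStrongColoring

variable {P : PartialStrongColoring G k}

theorem card_colorsAt_eq_degree (hw : ∀ b, G.Adj w b → s(w, b) ∉ P.uncolored) :
    #(P.colorsAt w) = G.degree w := by
  have : P.colorsAt w = (G.neighborFinset w).image fun b => P.color s(w, b) := by
    ext γ
    rw [mem_colorsAt, Finset.mem_image]
    simp only [SimpleGraph.mem_neighborFinset]
    exact exists_congr fun b => and_congr_right fun hb => and_iff_right (hw b hb)
  rw [this, Finset.card_image_of_injOn, G.card_neighborFinset_eq_degree]
  intro b hb c hc heq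
  rw [Finset.mem_coe, SimpleGraph.mem_neighborFinset] at hb hc
  by_contra hne
  exact color_ne_color hb hc (Ne.symm hne) (hw b hb) (hw c hc) heq

theorem colorsAt_subset_singleton (F : Fat G Δ v u w) (hpend : pendantEdges G v ⊆ P.uncolored)
    (huv : s(u, v) ∈ P.uncolored) : P.colorsAt v ⊆ {P.color s(v, w)} := by
  intro γ hγ
  obtain ⟨b, hb, hU, rfl⟩ := mem_colorsAt.1 hγ
  rcases F.eq_or_eq_or_mem_leaves hb with rfl | rfl | hbl
  · exact absurd (Sym2.eq_swap ▸ huv) hU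
  · exact Finset.mem_singleton_self _
  · exact absurd (hpend (mk_mem_pendantEdges.2 hbl)) hU

end PartialStrongColoring

open PartialStrongColoring

theorem Fat.two_le_degree (F : Fat G Δ v u w) : 2 ≤ G.degree v := by
  have := F.card_leaves
  omega

theorem Fat.mk_notMem_pendantEdges (F : Fat G Δ v u w) (x : V) : s(u, v) ∉ pendantEdges G x := by
  intro h
  have huv := eq_of_mem_pendantEdges h (Sym2.mem_mk_left u v) F.two_le_degree_left
  have hvx := eq_of_mem_pendantEdges h (Sym2.mem_mk_right u v) F.two_le_degree
  exact F.adj_left.ne (hvx.trans huv.symm)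

theorem MinimalCounterexample.exists_uncolored_eq_pendantEdges (M : MinimalCounterexample G Δ)
    (F : Fat G Δ v u w) :
    ∃ P : PartialStrongColoring G (3 * Δ - 3), P.uncolored = pendantEdges G v := by
  obtain ⟨q, hq⟩ := F.leaves_nonempty
  exact M.exists_uncolored_eq (mk_mem_pendantEdges.2 hq) fun _ => mem_pendantEdges.1

theorem Fat.not_adj (F : Fat G Δ v u w) (M : MinimalCounterexample G Δ) : ¬ G.Adj u w := by
  intro h
  obtain ⟨P, hP⟩ := M.exists_uncolored_eq_pendantEdges F
  have huw : s(u, w) ∉ P.uncolored := fun huw =>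
    F.adj_left.ne (eq_of_mem_pendantEdges (hP ▸ huw) (Sym2.mem_mk_left u w)
      F.two_le_degree_left).symm
  obtain ⟨Q, -, hQ⟩ := exists_extend_pendantEdges_of_common_color F (M.degree_le v)
    (color_mem_colorsAt h huw)
    (by rw [Sym2.eq_swap] at huw ⊢; exact color_mem_colorsAt h.symm huw)
  exact M.uncolored_ne_empty Q (by rw [hQ, hP, Finset.sdiff_self])

/-- The vertex `v` is fat with core neighbor `u`, and the other core neighbors of `u` are among
`x`, of degree at most two, and `y`. The uncolored edges `U` are `uv`, the pendant edges at `v` and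
some pendant edges at `u`. -/
structure FatUncolored (G : SimpleGraph V) (Δ : ℕ) (v u w x y : V) (U : Finset (Sym2 V)) :
    Prop where
  fat : Fat G Δ v u w
  coreNeighbors_subset : coreNeighbors G u ⊆ {v, x, y}
  degree_le_two : G.degree x ≤ 2
  pendantEdges_subset : pendantEdges G v ⊆ U
  mk_mem : s(u, v) ∈ U
  subset : U ⊆ insert s(u, v) (pendantEdges G u) ∪ pendantEdges G v

namespace FatUncolored

theorem notMem_of_two_le (H : FatUncolored G Δ v u w x y U) {a b : V} (ha : 2 ≤ G.degree a)
    (hav : a ≠ v) (hau : a ≠ u) : s(a, b) ∉ U := by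
  intro h
  have hmem := H.subset h
  simp only [Finset.mem_union, Finset.mem_insert] at hmem
  rcases hmem with (h | h) | h
  · rcases Sym2.mem_iff.1 (h ▸ Sym2.mem_mk_left a b) with rfl | rfl <;> contradiction
  · exact hau (eq_of_mem_pendantEdges h (Sym2.mem_mk_left a b) ha)
  · exact hav (eq_of_mem_pendantEdges h (Sym2.mem_mk_left a b) ha)

theorem notMem_right (H : FatUncolored G Δ v u w x y U) (b : V) : s(w, b) ∉ U :=
  H.notMem_of_two_le H.fat.symm.two_le_degree_left H.fat.symm.adj_left.ne' H.fat.ne.symm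

theorem erase (H : FatUncolored G Δ v u w x y U) (hq : q ∈ leaves G u)
    (hU : U.erase s(u, q) ⊆ U') (hU' : U' ⊆ U) : FatUncolored G Δ v u w x y U' where
  fat := H.fat
  coreNeighbors_subset := H.coreNeighbors_subset
  degree_le_two := H.degree_le_two
  pendantEdges_subset := fun _ he => hU <| Finset.mem_erase.2
    ⟨fun h => Finset.disjoint_left.1
      (disjoint_pendantEdges H.fat.adj_left.ne H.fat.two_le_degree) he
      (h ▸ mk_mem_pendantEdges.2 hq), H.pendantEdges_subset he⟩
  mk_mem := hU <| Finset.mem_erase.2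
    ⟨fun h => H.fat.mk_notMem_pendantEdges u (h ▸ mk_mem_pendantEdges.2 hq), H.mk_mem⟩
  subset := hU'.trans H.subset

variable {P : PartialStrongColoring G (3 * Δ - 3)}

theorem disjoint_colorsAt (H : FatUncolored G Δ v u w x y P.uncolored)
    (M : MinimalCounterexample G Δ) (hcard : #(pendantEdges G u \ P.uncolored) ≤ 2) :
    Disjoint (P.colorsAt u) (P.colorsAt w) := by
  refine Finset.disjoint_left.2 fun γ hu hw => ?_
  have := M.nine_le
  obtain ⟨Q, -, hQ⟩ := exists_extend_of_common_color (by omega) M.degree_le H.fat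
    H.coreNeighbors_subset H.pendantEdges_subset H.mk_mem hcard
    (coloredDegree_le_degree.trans H.degree_le_two) hu hw
  exact M.uncolored_ne_empty Q (by rw [hQ, Finset.sdiff_eq_empty_iff_subset.2 H.subset])

theorem exists_recolor (H : FatUncolored G Δ v u w x y P.uncolored)
    (M : MinimalCounterexample G Δ) (hcard : #(pendantEdges G u \ P.uncolored) ≤ 2)
    (hw : (leaves G w).Nonempty) (γ : Fin (3 * Δ - 3)) :
    ∃ Q : PartialStrongColoring G (3 * Δ - 3), Q.uncolored = P.uncolored ∧
      γ ∉ Q.colorsAt v ∧ (∀ e, v ∉ e → e ∉ pendantEdges G w → Q.color e = P.color e) ∧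
      ∀ c, c ≠ v → G.Adj u c ∨ c = u ∨ c = w → Q.colorsAt c = P.colorsAt c := by
  obtain ⟨Q, hQU, hvw, hcolor, hcolorsAt⟩ := PartialStrongColoring.exists_recolor H.fat {γ}
    (by simpa using hw.card_pos)
    (by simp [Finset.disjoint_iff_inter_eq_empty.1 (H.disjoint_colorsAt M hcard)])
    H.pendantEdges_subset fun b _ => H.notMem_right b
  refine ⟨Q, hQU, fun hγ => hvw ?_, hcolor, fun c hcv hc => hcolorsAt c hcv fun hcl => ?_⟩
  · rw [← hQU] at H
    exact Finset.mem_singleton.2 (Finset.mem_singleton.1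
      (colorsAt_subset_singleton H.fat H.pendantEdges_subset H.mk_mem hγ)).symm
  · have hdeg := (mem_leaves.1 hcl).2
    rcases hc with hc | rfl | rfl
    · exact H.fat.ne (eq_of_mem_leaves hcl hc.symm)
    · have := H.fat.two_le_degree_left
      omega
    · have := H.fat.symm.two_le_degree_left
      omega

theorem colorsAt_subset (H : FatUncolored G Δ v u w x y P.uncolored)
    (M : MinimalCounterexample G Δ) (hcard : #(pendantEdges G u \ P.uncolored) ≤ 1)
    (hw : (leaves G w).Nonempty) (hux : G.Adj u x) (hvx : v ≠ x) (huy : G.Adj u y) (hvy : v ≠ y)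
    (hq : q ∈ leaves G u) (hU : s(u, q) ∈ P.uncolored) :
    P.colorsAt w ⊆ P.colorsAt x ∪ P.colorsAt y := by
  intro γ hγ
  by_contra hxy
  rw [Finset.mem_union, not_or] at hxy
  obtain ⟨Q, hQU, hv, -, hcolorsAt⟩ := H.exists_recolor M (by omega) hw γ
  obtain ⟨R, hQR, huγ, hRU, hR⟩ := exists_color_pendant hq (hQU ▸ hU) (γ := γ)
    fun c hc hcγ => by
      have := H.coreNeighbors_subset hc
      simp only [Finset.mem_insert, Finset.mem_singleton] at this
      rcases this with rfl | rfl | rfl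
      · exact absurd hcγ hv
      · exact absurd (hcolorsAt c hvx.symm (.inl hux) ▸ hcγ) hxy.1
      · exact absurd (hcolorsAt c hvy.symm (.inl huy) ▸ hcγ) hxy.2
  rw [hQU] at hRU
  have hwq : w ≠ q := by
    rintro rfl
    exact H.fat.not_adj M (mem_leaves.1 hq).1
  have hcardR : #(pendantEdges G u \ R.uncolored) ≤ 2 := by
    have hsub : pendantEdges G u \ R.uncolored ⊆
        insert s(u, q) (pendantEdges G u \ P.uncolored) := fun e he => by
      rw [Finset.mem_sdiff] at he
      rw [Finset.mem_insert, Finset.mem_sdiff, or_iff_not_imp_left]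
      exact fun hne => ⟨he.1, fun hm => he.2 (hRU (Finset.mem_erase.2 ⟨hne, hm⟩))⟩
    exact (Finset.card_le_card hsub).trans ((Finset.card_insert_le _ _).trans (by omega))
  refine Finset.disjoint_left.1 ((H.erase hq hRU (hQU ▸ hQR.1)).disjoint_colorsAt M hcardR) huγ ?_
  rwa [hR w H.fat.ne.symm hwq, hcolorsAt w H.fat.symm.adj_left.ne' (.inr (.inr rfl))]

theorem exists_leaf_of_colorsAt_subset (H : FatUncolored G Δ v u w x y P.uncolored)
    (M : MinimalCounterexample G Δ) (hcard : #(pendantEdges G u \ P.uncolored) ≤ 2)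
    (hux : G.Adj u x) (hxU : s(u, x) ∉ P.uncolored) (huy : G.Adj u y) (hyU : s(u, y) ∉ P.uncolored)
    (hsub : P.colorsAt w ⊆ P.colorsAt x ∪ P.colorsAt y)
    (hy : G.degree x = 1 ∨ G.degree y < Δ ∨ (leaves G y).Nonempty) :
    (leaves G y).Nonempty ∧ P.colorsAt y \ P.colorsAt u ⊆ P.colorsAt w \ P.colorsAt x := by
  have hdisj := H.disjoint_colorsAt M hcard
  have hw := card_colorsAt_eq_degree fun b _ => H.notMem_right b
  rw [H.fat.degree_right] at hw
  have card_lt {c : V} (huc : G.Adj u c) (hcU : s(u, c) ∉ P.uncolored) :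
      #(P.colorsAt c \ P.colorsAt u) + 1 ≤ G.degree c := by
    refine (Nat.succ_le_of_lt (Finset.card_lt_card ?_)).trans
      ((P.card_colorsAt_le c).trans coloredDegree_le_degree)
    refine ⟨Finset.sdiff_subset, fun h => ?_⟩
    refine (Finset.mem_sdiff.1 (h (?_ : P.color s(u, c) ∈ _))).2 (color_mem_colorsAt huc hcU)
    rw [Sym2.eq_swap] at hcU ⊢
    exact color_mem_colorsAt huc.symm hcU
  have hsub' : P.colorsAt w ⊆ (P.colorsAt y \ P.colorsAt u) ∪ (P.colorsAt x \ P.colorsAt u) := by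
    rw [← Finset.union_sdiff_distrib, Finset.union_comm, Finset.subset_sdiff]
    exact ⟨hsub, hdisj.symm⟩
  have hx := card_lt hux hxU
  have hy' := card_lt huy hyU
  have := H.degree_le_two
  have := M.degree_le y
  have hle := Finset.card_le_card hsub'
  have hunion := Finset.card_union_add_card_inter (P.colorsAt y \ P.colorsAt u)
    (P.colorsAt x \ P.colorsAt u)
  have heq := Finset.eq_of_subset_of_card_le hsub' (by omega)
  have hxy : Disjoint (P.colorsAt y \ P.colorsAt u) (P.colorsAt x \ P.colorsAt u) :=
    Finset.disjoint_iff_inter_eq_empty.2 (Finset.card_eq_zero.1 (by omega))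
  refine ⟨hy.elim (by omega) fun h => h.elim (by omega) id, fun γ hγ => ?_⟩
  refine Finset.mem_sdiff.2 ⟨?_, ?_⟩
  · exact heq ▸ Finset.mem_union_left _ hγ
  · exact fun hγx => Finset.disjoint_left.1 hxy hγ
      (Finset.mem_sdiff.2 ⟨hγx, (Finset.mem_sdiff.1 hγ).2⟩)

theorem exists_color_mem_colorsAt_of_swap {t : V} (H : FatUncolored G Δ v u w x y P.uncolored)
    (M : MinimalCounterexample G Δ) (hcard : #(pendantEdges G u \ P.uncolored) ≤ 2)
    (hw : (leaves G w).Nonempty) (hux : G.Adj u x) (hvx : v ≠ x)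
    (huy : G.Adj u y) (hvy : v ≠ y) (hy : 2 ≤ G.degree y) (ht : t ∈ leaves G y)
    (htu : P.color s(y, t) ∉ P.colorsAt u) (htx : P.color s(y, t) ∉ P.colorsAt x) :
    ∃ Q : PartialStrongColoring G (3 * Δ - 3), Q.uncolored = P.uncolored ∧
      P.color s(y, t) ∈ Q.colorsAt u ∧ Q.colorsAt w = P.colorsAt w := by
  have ht1 := (mem_leaves.1 ht).2
  have ne_of_two_le {c : V} (hc : 2 ≤ G.degree c) : c ≠ t := by
    rintro rfl
    omega
  obtain ⟨Q, hQU, htv, hcolor, hcolorsAt⟩ := H.exists_recolor M hcard hw (P.color s(y, t))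
  have heq : Q.color s(y, t) = P.color s(y, t) := by
    refine hcolor _ (fun hv => ?_) fun h => H.fat.not_adj M ?_
    · exact (Sym2.mem_iff.1 hv).elim hvy (ne_of_two_le H.fat.two_le_degree)
    · exact eq_of_mem_pendantEdges h (Sym2.mem_mk_left y t) hy ▸ huy
  have hytU : s(y, t) ∉ Q.uncolored := hQU ▸ H.notMem_of_two_le hy hvy.symm huy.ne'
  have huyU : s(u, y) ∉ Q.uncolored :=
    Sym2.eq_swap ▸ hQU ▸ H.notMem_of_two_le hy hvy.symm huy.ne'
  obtain ⟨R, hRU, hR⟩ := exists_swap huy ht huyU hytU fun c huc hcy hc => by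
    rw [heq] at hc
    rcases mem_leaves_or_mem_coreNeighbors huc with hcl | hcc
    · exact htu (hcolorsAt u H.fat.adj_left.ne' (.inr (.inl rfl)) ▸
        colorsAt_subset_of_mem_leaves hcl hc)
    · have := H.coreNeighbors_subset hcc
      simp only [Finset.mem_insert, Finset.mem_singleton, hcy, or_false] at this
      rcases this with rfl | rfl
      exacts [htv hc, htx (hcolorsAt c hvx.symm (.inl hux) ▸ hc)]
  refine ⟨R, hRU.trans hQU, ?_, ?_⟩
  · rw [← heq, ← Equiv.swap_apply_left s(u, y) s(y, t), ← Function.comp_apply (f := Q.color), ← hR]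
    exact color_mem_colorsAt huy (hRU ▸ huyU)
  · rw [colorsAt_of_swap hRU hR huy (mem_leaves.1 ht).1 huyU hytU H.fat.ne.symm
      (ne_of_two_le H.fat.symm.two_le_degree_left),
      hcolorsAt w H.fat.symm.adj_left.ne' (.inr (.inr rfl))]

theorem colorsAt_sdiff_not_subset (H : FatUncolored G Δ v u w x y P.uncolored)
    (M : MinimalCounterexample G Δ) (hcard : #(pendantEdges G u \ P.uncolored) ≤ 2)
    (hw : (leaves G w).Nonempty) (hux : G.Adj u x) (hvx : v ≠ x)
    (huy : G.Adj u y) (hvy : v ≠ y) (hy : 2 ≤ G.degree y) (hyl : (leaves G y).Nonempty) :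
    ¬ P.colorsAt y \ P.colorsAt u ⊆ P.colorsAt w \ P.colorsAt x := by
  intro hsub
  obtain ⟨t, ht⟩ := hyl
  have hyt := (mem_leaves.1 ht).1
  have hut : u ≠ t := by
    rintro rfl
    have := H.fat.two_le_degree_left
    have := (mem_leaves.1 ht).2
    omega
  have hU : s(y, t) ∉ P.uncolored := H.notMem_of_two_le hy hvy.symm huy.ne'
  have htu : P.color s(y, t) ∉ P.colorsAt u := color_notMem_colorsAt hyt hU huy.symm hut
  obtain ⟨htw, htx⟩ := Finset.mem_sdiff.1
    (hsub (Finset.mem_sdiff.2 ⟨color_mem_colorsAt hyt hU, htu⟩))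
  obtain ⟨Q, hQU, hQu, hQw⟩ :=
    H.exists_color_mem_colorsAt_of_swap M hcard hw hux hvx huy hvy hy ht htu htx
  rw [← hQU] at H hcard
  exact Finset.disjoint_left.1 (H.disjoint_colorsAt M hcard) hQu (hQw ▸ htw)

end FatUncolored

theorem MinimalCounterexample.coreNeighbors_not_subset (M : MinimalCounterexample G Δ)
    (F : Fat G Δ v u w) (hw : (leaves G w).Nonempty) (hux : G.Adj u x) (hvx : v ≠ x)
    (hx : G.degree x ≤ 2) (hy : y ∈ coreNeighbors G u) (hvy : v ≠ y)
    (hq : q ∈ leaves G u) (hqx : q ≠ x)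
    (hxy' : G.degree x = 1 ∨ G.degree y < Δ ∨ (leaves G y).Nonempty) :
    ¬ coreNeighbors G u ⊆ {v, x, y} := by
  intro hcore
  obtain ⟨huy, hy2⟩ := mem_coreNeighbors.1 hy
  obtain ⟨P₀, hP₀⟩ := M.exists_uncolored_eq_pendantEdges F
  set P := P₀.uncolor (insert s(u, v) ((pendantEdges G u).erase s(u, x)))
  have hU : P.uncolored =
      pendantEdges G v ∪ insert s(u, v) ((pendantEdges G u).erase s(u, x)) := hP₀ ▸ rfl
  have H : FatUncolored G Δ v u w x y P.uncolored := by
    refine ⟨F, hcore, hx, ?_, ?_, ?_⟩ <;> rw [hU]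
    · exact Finset.subset_union_left
    · simp
    · rw [Finset.union_comm]
      gcongr
      exact Finset.erase_subset _ _
  have hcard : #(pendantEdges G u \ P.uncolored) ≤ 1 := by
    rw [← Finset.card_singleton s(u, x)]
    refine Finset.card_le_card fun e he => ?_
    rw [hU] at he
    grind
  have hqU : s(u, q) ∈ P.uncolored := by
    rw [hU]
    exact Finset.mem_union_right _ (Finset.mem_insert_of_mem (Finset.mem_erase.2
      ⟨Sym2.congr_right.not.2 hqx, mk_mem_pendantEdges.2 hq⟩))
  have huU {c : V} (hcv : v ≠ c) (hc : s(u, c) ∉ (pendantEdges G u).erase s(u, x)) :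
      s(u, c) ∉ P.uncolored := by
    rw [hU, Finset.mem_union, Finset.mem_insert, not_or, not_or, Sym2.congr_right]
    exact ⟨fun h => F.adj_left.ne (eq_of_mem_pendantEdges h (Sym2.mem_mk_left u c)
      F.two_le_degree_left).symm, hcv.symm, hc⟩
  have hyU : s(u, y) ∉ P.uncolored := by
    refine huU hvy fun h => ?_
    have := (mem_leaves.1 (mk_mem_pendantEdges.1 (Finset.mem_of_mem_erase h))).2
    omega
  obtain ⟨hyl, hsub⟩ := H.exists_leaf_of_colorsAt_subset M (by omega) hux (huU hvx (by simp)) huy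
    hyU (H.colorsAt_subset M hcard hw hux hvx huy hvy hq hqU) hxy'
  exact H.colorsAt_sdiff_not_subset M (by omega) hw hux hvx huy hvy hy2 hyl hsub

end SharedFat

section TwoFat

variable {V : Type*} [Fintype V] {G : SimpleGraph V} {Δ : ℕ} {u v w x y z q r : V}
  {U : Finset (Sym2 V)}

open PartialStrongColoring

theorem exists_mem_eq_or_notMem {α : Type*} {s t : Finset α} {a : α} (ha : a ∈ t)
    (hcard : #t ≤ #s) : ∃ b ∈ s, (b = a ∨ b ∉ t) ∧ (a ∈ s → b = a) := by
  by_cases has : a ∈ s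
  · exact ⟨a, has, .inl rfl, fun _ => rfl⟩
  have hst : ¬ s ⊆ t := fun hst => has (Finset.eq_of_subset_of_card_le hst hcard ▸ ha)
  obtain ⟨b, hbs, hbt⟩ := Finset.not_subset.1 hst
  exact ⟨b, hbs, .inr hbt, fun h => absurd h has⟩

theorem PartialStrongColoring.exists_color_pendant_pair {k : ℕ} {P : PartialStrongColoring G k}
    {σ τ : Fin k} (hq : q ∈ leaves G u) (hr : r ∈ leaves G u) (hqr : q ≠ r)
    (hU : pendantEdges G u ⊆ P.uncolored)
    (hσ : ∀ c ∈ coreNeighbors G u, σ ∈ P.colorsAt c → σ ∈ P.colorsAt u)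
    (hτ : ∀ c ∈ coreNeighbors G u, τ ∈ P.colorsAt c → τ ∈ P.colorsAt u) :
    ∃ Q ≥ P, σ ∈ Q.colorsAt u ∧ τ ∈ Q.colorsAt u ∧
      P.uncolored \ {s(u, q), s(u, r)} ⊆ Q.uncolored ∧
      ∀ c, 2 ≤ G.degree c → c ≠ u → Q.colorsAt c = P.colorsAt c := by
  have ne_leaf {c d : V} (hc : 2 ≤ G.degree c) (hd : d ∈ leaves G u) : c ≠ d := by
    rintro rfl
    have := (mem_leaves.1 hd).2
    omega
  obtain ⟨Q, hPQ, hQσ, hQU, hQ⟩ := exists_color_pendant hq (hU (mk_mem_pendantEdges.2 hq)) hσ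
  have hrU : s(u, r) ∈ Q.uncolored := hQU (Finset.mem_erase.2
    ⟨Sym2.congr_right.not.2 hqr.symm, hU (mk_mem_pendantEdges.2 hr)⟩)
  obtain ⟨R, hQR, hRτ, hRU, hR⟩ := exists_color_pendant hr hrU fun c hc hcτ => by
    obtain ⟨huc, hc2⟩ := mem_coreNeighbors.1 hc
    rw [hQ c huc.ne' (ne_leaf hc2 hq)] at hcτ
    exact colorsAt_subset_of_le hPQ (hτ c hc hcτ)
  refine ⟨R, hPQ.trans hQR, colorsAt_subset_of_le hQR hQσ, hRτ, fun e he => hRU ?_,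
    fun c hc hcu => ?_⟩
  · simp only [Finset.mem_sdiff, Finset.mem_insert, Finset.mem_singleton, not_or] at he
    exact Finset.mem_erase.2 ⟨he.2.2, hQU (Finset.mem_erase.2 ⟨he.2.1, he.1⟩)⟩
  · rw [hR c hcu (ne_leaf hc hr), hQ c hcu (ne_leaf hc hq)]

/-- The vertices `v` and `x` are fat with common core neighbor `u`, which has at most one further
core neighbor `y`. The uncolored edges `U` are `uv` and `ux`, the pendant edges at `v` and at `x`,
and some pendant edges at `u`. -/
structure TwoFatUncolored (G : SimpleGraph V) (Δ : ℕ) (v u w x z y : V) (U : Finset (Sym2 V)) :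
    Prop where
  left : Fat G Δ v u w
  right : Fat G Δ x u z
  ne : v ≠ x
  coreNeighbors_subset : coreNeighbors G u ⊆ {v, x, y}
  pendantEdges_left_subset : pendantEdges G v ⊆ U
  pendantEdges_right_subset : pendantEdges G x ⊆ U
  mk_left_mem : s(u, v) ∈ U
  mk_right_mem : s(u, x) ∈ U
  subset : U ⊆ insert s(u, x) (insert s(u, v) (pendantEdges G u) ∪ pendantEdges G v ∪
    pendantEdges G x)

namespace TwoFatUncolored

theorem notMem_of_two_le (H : TwoFatUncolored G Δ v u w x z y U) {a b : V} (ha : 2 ≤ G.degree a)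
    (hav : a ≠ v) (hau : a ≠ u) (hax : a ≠ x) : s(a, b) ∉ U := by
  intro h
  have hmem := H.subset h
  simp only [Finset.mem_union, Finset.mem_insert] at hmem
  rcases hmem with h | ((h | h) | h) | h
  · rcases Sym2.mem_iff.1 (h ▸ Sym2.mem_mk_left a b) with rfl | rfl <;> contradiction
  · rcases Sym2.mem_iff.1 (h ▸ Sym2.mem_mk_left a b) with rfl | rfl <;> contradiction
  · exact hau (eq_of_mem_pendantEdges h (Sym2.mem_mk_left a b) ha)
  · exact hav (eq_of_mem_pendantEdges h (Sym2.mem_mk_left a b) ha)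
  · exact hax (eq_of_mem_pendantEdges h (Sym2.mem_mk_left a b) ha)

theorem symm (H : TwoFatUncolored G Δ v u w x z y U) : TwoFatUncolored G Δ x u z v w y U where
  left := H.right
  right := H.left
  ne := H.ne.symm
  coreNeighbors_subset := H.coreNeighbors_subset.trans_eq (Finset.insert_comm v x {y})
  pendantEdges_left_subset := H.pendantEdges_right_subset
  pendantEdges_right_subset := H.pendantEdges_left_subset
  mk_left_mem := H.mk_right_mem
  mk_right_mem := H.mk_left_mem
  subset := H.subset.trans fun e he => by
    simp only [Finset.mem_insert, Finset.mem_union] at he ⊢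
    tauto

theorem right_ne (H : TwoFatUncolored G Δ v u w x z y U) (M : MinimalCounterexample G Δ) :
    w ≠ x := by
  rintro rfl
  exact H.left.not_adj M H.right.adj_left.symm

theorem notMem_right (H : TwoFatUncolored G Δ v u w x z y U) (M : MinimalCounterexample G Δ)
    (b : V) : s(w, b) ∉ U :=
  H.notMem_of_two_le H.left.symm.two_le_degree_left H.left.symm.adj_left.ne' H.left.ne.symm
    (H.right_ne M)

theorem of_sdiff_subset {U' : Finset (Sym2 V)} (H : TwoFatUncolored G Δ v u w x z y U)
    (hU : U \ pendantEdges G u ⊆ U') (hU' : U' ⊆ U) : TwoFatUncolored G Δ v u w x z y U' where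
  left := H.left
  right := H.right
  ne := H.ne
  coreNeighbors_subset := H.coreNeighbors_subset
  pendantEdges_left_subset := (Finset.subset_sdiff.2 ⟨H.pendantEdges_left_subset,
    disjoint_pendantEdges H.left.adj_left.ne H.left.two_le_degree⟩).trans hU
  pendantEdges_right_subset := (Finset.subset_sdiff.2 ⟨H.pendantEdges_right_subset,
    disjoint_pendantEdges H.right.adj_left.ne H.right.two_le_degree⟩).trans hU
  mk_left_mem := hU (Finset.mem_sdiff.2 ⟨H.mk_left_mem, H.left.mk_notMem_pendantEdges u⟩)
  mk_right_mem := hU (Finset.mem_sdiff.2 ⟨H.mk_right_mem, H.right.mk_notMem_pendantEdges u⟩)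
  subset := hU'.trans H.subset

variable {P : PartialStrongColoring G (3 * Δ - 3)}

theorem disjoint_colorsAt_or (H : TwoFatUncolored G Δ v u w x z y P.uncolored)
    (M : MinimalCounterexample G Δ) (hcard : #(pendantEdges G u \ P.uncolored) ≤ 2) :
    Disjoint (P.colorsAt u) (P.colorsAt w) ∨ Disjoint (P.colorsAt u) (P.colorsAt z) := by
  by_contra! hcommon
  obtain ⟨γ, hγu, hγw⟩ := Finset.not_disjoint_iff.1 hcommon.1
  obtain ⟨δ, hδu, hδz⟩ := Finset.not_disjoint_iff.1 hcommon.2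
  have := M.nine_le
  have hxcore : x ∈ coreNeighbors G u :=
    mem_coreNeighbors.2 ⟨H.right.adj_left.symm, H.right.two_le_degree⟩
  have hcore : coreNeighbors G u ⊆ {x, v, y} := H.coreNeighbors_subset.trans_eq
    (Finset.insert_comm v x {y})
  obtain ⟨Q, hPQ, hQ⟩ := exists_extend_left H.right H.pendantEdges_right_subset H.mk_right_mem
    (by omega) (by
      have := sum_erase_coloredDegree_le (U := P.uncolored) hxcore hcore
      have := H.left.coloredDegree_le_two H.pendantEdges_left_subset
      have := (coloredDegree_le_degree (U := P.uncolored)).trans (M.degree_le y)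
      omega)
  have hpendv : pendantEdges G v ⊆ Q.uncolored := hQ ▸ Finset.subset_erase.2
    ⟨H.pendantEdges_left_subset, H.right.mk_notMem_pendantEdges v⟩
  have huv : s(u, v) ∈ Q.uncolored :=
    hQ ▸ Finset.mem_erase.2 ⟨Sym2.congr_right.not.2 H.ne, H.mk_left_mem⟩
  have hpendx : pendantEdges G x ⊆ Q.uncolored \ insert s(u, v) (pendantEdges G u) := by
    rw [hQ, Finset.subset_sdiff, Finset.subset_erase, Finset.disjoint_insert_right]
    exact ⟨⟨H.pendantEdges_right_subset, H.right.mk_notMem_pendantEdges x⟩,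
      H.left.mk_notMem_pendantEdges x,
      disjoint_pendantEdges H.right.adj_left.ne H.right.two_le_degree⟩
  obtain ⟨R, hQR, hR⟩ := exists_extend_of_common_color (by omega) M.degree_le H.left
    H.coreNeighbors_subset hpendv huv
    ((Finset.card_le_card fun e he => by
      have := H.right.mk_notMem_pendantEdges u
      grind).trans hcard)
    (H.right.coloredDegree_le_two hpendx) (colorsAt_subset_of_le hPQ hγu)
    (colorsAt_subset_of_le hPQ hγw)
  have hPR := hPQ.trans hQR
  obtain ⟨S, -, hS⟩ := exists_extend_pendantEdges_of_common_color H.right (M.degree_le x)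
    (colorsAt_subset_of_le hPR hδu) (colorsAt_subset_of_le hPR hδz)
  refine M.uncolored_ne_empty S ?_
  rw [hS, hR, hQ, sdiff_sdiff_left, Finset.sdiff_eq_empty_iff_subset]
  exact Finset.subset_insert_iff.1 H.subset

theorem exists_recolor (H : TwoFatUncolored G Δ v u w x z y P.uncolored)
    (M : MinimalCounterexample G Δ) {A : Finset (Fin (3 * Δ - 3))} (hA : #A ≤ 2)
    (hw : 2 ≤ #(leaves G w)) (hz : 2 ≤ #(leaves G z))
    (huw : P.colorsAt u ∩ P.colorsAt w ⊆ A) (huz : P.colorsAt u ∩ P.colorsAt z ⊆ A) :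
    ∃ Q : PartialStrongColoring G (3 * Δ - 3), Q.uncolored = P.uncolored ∧
      Disjoint (Q.colorsAt v) A ∧ Disjoint (Q.colorsAt x) A ∧
      ∀ c, 2 ≤ G.degree c → c ≠ v → c ≠ x → Q.colorsAt c = P.colorsAt c := by
  have notMem_leaves {c d : V} (hc : 2 ≤ G.degree c) : c ∉ leaves G d := fun h => by
    have := (mem_leaves.1 h).2
    omega
  obtain ⟨Q, hQU, hvw, -, hQ⟩ := PartialStrongColoring.exists_recolor H.left A (hA.trans hw) huw
    H.pendantEdges_left_subset fun b _ => H.notMem_right M b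
  obtain ⟨R, hRU, hxz, -, hR⟩ := PartialStrongColoring.exists_recolor (P := Q) H.right A
    (hA.trans hz)
    (by rwa [hQ u H.left.adj_left.ne' (notMem_leaves H.left.two_le_degree_left),
      hQ z (H.symm.right_ne M) (notMem_leaves H.right.symm.two_le_degree_left)])
    (hQU ▸ H.pendantEdges_right_subset) fun b _ => hQU ▸ H.symm.notMem_right M b
  refine ⟨R, hRU.trans hQU, ?_, ?_, fun c hc hcv hcx => ?_⟩
  · rw [hR v H.ne (notMem_leaves H.left.two_le_degree)]
    exact (Finset.disjoint_singleton_left.2 hvw).mono_left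
      (colorsAt_subset_singleton H.left (hQU ▸ H.pendantEdges_left_subset) (hQU ▸ H.mk_left_mem))
  · exact (Finset.disjoint_singleton_left.2 hxz).mono_left
      (colorsAt_subset_singleton H.right (hRU ▸ hQU ▸ H.pendantEdges_right_subset)
        (hRU ▸ hQU ▸ H.mk_right_mem))
  · rw [hR c hcx (notMem_leaves hc), hQ c hcv (notMem_leaves hc)]

theorem colorsAt_subset_singleton (H : TwoFatUncolored G Δ v u w x z y P.uncolored)
    (hpend : pendantEdges G u ⊆ P.uncolored) : P.colorsAt u ⊆ {P.color s(u, y)} := by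
  intro γ hγ
  obtain ⟨b, hb, hU, rfl⟩ := mem_colorsAt.1 hγ
  rcases mem_leaves_or_mem_coreNeighbors hb with hb | hb
  · exact absurd (hpend (mk_mem_pendantEdges.2 hb)) hU
  · have := H.coreNeighbors_subset hb
    simp only [Finset.mem_insert, Finset.mem_singleton] at this
    rcases this with rfl | rfl | rfl
    exacts [absurd H.mk_left_mem hU, absurd H.mk_right_mem hU, Finset.mem_singleton_self _]

theorem exists_mem_colorsAt_right (H : TwoFatUncolored G Δ v u w x z y P.uncolored)
    (M : MinimalCounterexample G Δ) (hpend : pendantEdges G u ⊆ P.uncolored)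
    (huy : G.Adj u y) (hU : s(u, y) ∉ P.uncolored) :
    ∃ σ ∈ P.colorsAt w, (σ ∈ P.colorsAt u ∨ σ ∉ P.colorsAt y) ∧
      P.colorsAt u ∩ P.colorsAt w ⊆ {σ} := by
  have hy : P.color s(u, y) ∈ P.colorsAt y := by
    rw [Sym2.eq_swap] at hU ⊢
    exact color_mem_colorsAt huy.symm hU
  obtain ⟨σ, hσw, hσy, hσ⟩ := exists_mem_eq_or_notMem (s := P.colorsAt w) hy <| by
    rw [card_colorsAt_eq_degree fun b _ => H.notMem_right M b, H.left.degree_right]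
    exact (P.card_colorsAt_le y).trans (coloredDegree_le_degree.trans (M.degree_le y))
  refine ⟨σ, hσw, hσy.imp_left ?_, fun γ hγ => ?_⟩
  · rintro rfl
    exact color_mem_colorsAt huy hU
  rw [Finset.mem_inter] at hγ
  obtain rfl := Finset.mem_singleton.1 (H.colorsAt_subset_singleton hpend hγ.1)
  exact Finset.mem_singleton.2 (hσ hγ.2).symm

theorem exists_recolor_safe (H : TwoFatUncolored G Δ v u w x z y P.uncolored)
    (M : MinimalCounterexample G Δ) (hy : y ∈ coreNeighbors G u) (hyv : y ≠ v) (hyx : y ≠ x)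
    (hw : 2 ≤ #(leaves G w)) (hz : 2 ≤ #(leaves G z)) (hpend : pendantEdges G u ⊆ P.uncolored) :
    ∃ Q : PartialStrongColoring G (3 * Δ - 3), Q.uncolored = P.uncolored ∧
      ∃ σ ∈ Q.colorsAt w, ∃ τ ∈ Q.colorsAt z, ∀ ρ ∈ ({σ, τ} : Finset _),
        ∀ c ∈ coreNeighbors G u, ρ ∈ Q.colorsAt c → ρ ∈ Q.colorsAt u := by
  obtain ⟨huy, hy2⟩ := mem_coreNeighbors.1 hy
  have hU : s(u, y) ∉ P.uncolored := Sym2.eq_swap ▸ H.notMem_of_two_le hy2 hyv huy.ne' hyx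
  obtain ⟨σ, hσw, hσy, hσ⟩ := H.exists_mem_colorsAt_right M hpend huy hU
  obtain ⟨τ, hτz, hτy, hτ⟩ := H.symm.exists_mem_colorsAt_right M hpend huy hU
  obtain ⟨Q, hQU, hQv, hQx, hQ⟩ := H.exists_recolor M (A := {σ, τ}) Finset.card_le_two hw hz
    (hσ.trans (by simp)) (hτ.trans (by simp))
  refine ⟨Q, hQU, σ, ?_, τ, ?_, fun ρ hρ c hc hcρ => ?_⟩
  · rwa [hQ w H.left.symm.two_le_degree_left H.left.symm.adj_left.ne' (H.right_ne M)]
  · rwa [hQ z H.right.symm.two_le_degree_left (H.symm.right_ne M) H.right.symm.adj_left.ne']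
  have hρy : ρ ∈ P.colorsAt u ∨ ρ ∉ P.colorsAt y := by
    rcases Finset.mem_insert.1 hρ with rfl | hρ
    exacts [hσy, Finset.mem_singleton.1 hρ ▸ hτy]
  have := H.coreNeighbors_subset hc
  simp only [Finset.mem_insert, Finset.mem_singleton] at this
  rcases this with rfl | rfl | rfl
  · exact absurd hρ (Finset.disjoint_left.1 hQv hcρ)
  · exact absurd hρ (Finset.disjoint_left.1 hQx hcρ)
  · rw [hQ u H.left.two_le_degree_left H.left.adj_left.ne' H.right.adj_left.ne']
    exact hρy.resolve_right fun h => h (hQ c hy2 hyv hyx ▸ hcρ)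

theorem not_pendantEdges_subset (H : TwoFatUncolored G Δ v u w x z y P.uncolored)
    (M : MinimalCounterexample G Δ) (hy : y ∈ coreNeighbors G u) (hyv : y ≠ v) (hyx : y ≠ x)
    (hu : 2 ≤ #(leaves G u)) (hw : 2 ≤ #(leaves G w)) (hz : 2 ≤ #(leaves G z)) :
    ¬ pendantEdges G u ⊆ P.uncolored := by
  intro hpend
  obtain ⟨Q, hQU, σ, hσw, τ, hτz, hsafe⟩ := H.exists_recolor_safe M hy hyv hyx hw hz hpend
  obtain ⟨q, hq, r, hr, hqr⟩ := Finset.one_lt_card.1 hu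
  rw [← hQU] at H hpend
  obtain ⟨R, hQR, hRσ, hRτ, hRU, hR⟩ := exists_color_pendant_pair hq hr hqr hpend
    (hsafe σ (by simp)) (hsafe τ (by simp))
  have hsub : ({s(u, q), s(u, r)} : Finset _) ⊆ pendantEdges G u := by
    simp [Finset.insert_subset_iff, mk_mem_pendantEdges, hq, hr]
  have HR := H.of_sdiff_subset ((Finset.sdiff_subset_sdiff le_rfl hsub).trans hRU) hQR.1
  have hcard : #(pendantEdges G u \ R.uncolored) ≤ 2 :=
    (Finset.card_le_card (t := {s(u, q), s(u, r)}) (by grind)).trans Finset.card_le_two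
  rcases HR.disjoint_colorsAt_or M hcard with h | h
  · refine Finset.disjoint_left.1 h hRσ ?_
    rwa [hR w H.left.symm.two_le_degree_left H.left.ne.symm]
  · refine Finset.disjoint_left.1 h hRτ ?_
    rwa [hR z H.right.symm.two_le_degree_left H.right.ne.symm]

end TwoFatUncolored

theorem MinimalCounterexample.coreNeighbors_not_subset_of_fat (M : MinimalCounterexample G Δ)
    (F : Fat G Δ v u w) (F' : Fat G Δ x u z) (hvx : v ≠ x) (hy : y ∈ coreNeighbors G u)
    (hyv : y ≠ v) (hyx : y ≠ x) (hu : 2 ≤ #(leaves G u)) (hw : 2 ≤ #(leaves G w))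
    (hz : 2 ≤ #(leaves G z)) : ¬ coreNeighbors G u ⊆ {v, x, y} := by
  intro hcore
  obtain ⟨P₀, hP₀⟩ := M.exists_uncolored_eq_pendantEdges F
  set P := P₀.uncolor
    (insert s(u, x) (insert s(u, v) (pendantEdges G u)) ∪ pendantEdges G x)
  have hU : P.uncolored = pendantEdges G v ∪
      (insert s(u, x) (insert s(u, v) (pendantEdges G u)) ∪ pendantEdges G x) := hP₀ ▸ rfl
  have H : TwoFatUncolored G Δ v u w x z y P.uncolored := by
    refine ⟨F, F', hvx, hcore, ?_, ?_, ?_, ?_, ?_⟩ <;> rw [hU]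
    all_goals grind
  exact H.not_pendantEdges_subset M hy hyv hyx hu hw hz (by rw [hU]; grind)

end TwoFat

theorem exists_eq_triple {α : Type*} {s : Finset α} {p : α → Prop} [DecidablePred p] (hs : #s = 3)
    (hp : 1 < #{x ∈ s | p x}) : ∃ a b c, a ≠ b ∧ a ≠ c ∧ b ≠ c ∧ s = {a, b, c} ∧ p a ∧ p b := by
  obtain ⟨a, ha, b, hb, hab⟩ := Finset.one_lt_card.1 hp
  obtain ⟨ha, hpa⟩ := Finset.mem_filter.1 ha
  obtain ⟨hb, hpb⟩ := Finset.mem_filter.1 hb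
  have hb' : b ∈ s.erase a := Finset.mem_erase.2 ⟨hab.symm, hb⟩
  obtain ⟨c, hc⟩ : ∃ c, (s.erase a).erase b = {c} := Finset.card_eq_one.1 <| by
    rw [Finset.card_erase_of_mem hb', Finset.card_erase_of_mem ha, hs]
  have hs : s = {a, b, c} := by rw [← hc, Finset.insert_erase hb', Finset.insert_erase ha]
  have hc' := Finset.mem_singleton_self c
  rw [← hc] at hc'
  exact ⟨a, b, c, hab, by grind, by grind, hs, hpa, hpb⟩

section Discharging

variable {V : Type*} [Fintype V] {G : SimpleGraph V} {Δ : ℕ} {a b c u v w : V}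

theorem Rich.le_card_leaves_add_sum (h : Rich G Δ v) :
    3 * Δ - 2 ≤ #(leaves G v) + ∑ w ∈ coreNeighbors G v, G.degree w := by
  rwa [Rich, sum_neighborFinset_eq, Finset.sum_congr rfl fun q hq => (mem_leaves.1 hq).2,
    ← Finset.card_eq_sum_ones] at h

/-- The vertex `v` has exactly two core neighbors and is adjacent to a leaf, but no neighbor with
eight core neighbors provides the charge it lacks. -/
structure Needy (G : SimpleGraph V) (v : V) : Prop where
  card_coreNeighbors : #(coreNeighbors G v) = 2
  three_le_degree : 3 ≤ G.degree v
  card_le_seven : ∀ w, G.Adj v w → #(coreNeighbors G w) ≤ 7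

namespace MinimalCounterexample

theorem sum_degree_coreNeighbors_le (M : MinimalCounterexample G Δ) (v : V) :
    ∑ w ∈ coreNeighbors G v, G.degree w ≤ #(coreNeighbors G v) * Δ :=
  Finset.sum_le_card_nsmul _ _ _ fun w _ => M.degree_le w

theorem rich_of_card_leaves_pos (M : MinimalCounterexample G Δ) (h : 0 < #(leaves G v)) :
    Rich G Δ v := by
  obtain ⟨q, hq⟩ := Finset.card_pos.1 h
  exact M.rich_of_mem_leaves hq

theorem two_le_card_coreNeighbors (M : MinimalCounterexample G Δ) (hv : 2 ≤ G.degree v) :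
    2 ≤ #(coreNeighbors G v) := by
  by_contra! hlt
  have hdeg := card_leaves_add_card_coreNeighbors (G := G) v
  have hrich := (M.rich_of_card_leaves_pos (v := v) (by omega)).le_card_leaves_add_sum
  have hsum := (M.sum_degree_coreNeighbors_le v).trans
    (Nat.mul_le_mul_right Δ (Nat.le_of_lt_succ hlt))
  have := M.nine_le
  have := M.degree_le v
  omega

theorem exists_fat (M : MinimalCounterexample G Δ) (hcard : #(coreNeighbors G v) = 2)
    (hv : 3 ≤ G.degree v) (hu : u ∈ coreNeighbors G v) :
    ∃ w, Fat G Δ v u w ∧ G.degree v = Δ := by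
  obtain ⟨w, hw⟩ : ∃ w, (coreNeighbors G v).erase u = {w} :=
    Finset.card_eq_one.1 (by rw [Finset.card_erase_of_mem hu, hcard])
  have huw : u ≠ w := (Finset.ne_of_mem_erase (hw ▸ Finset.mem_singleton_self w)).symm
  have hcore : coreNeighbors G v = {u, w} := by rw [← Finset.insert_erase hu, hw]
  have hdeg := card_leaves_add_card_coreNeighbors (G := G) v
  have hleaves : 0 < #(leaves G v) := by omega
  have hrich := (M.rich_of_card_leaves_pos hleaves).le_card_leaves_add_sum
  rw [hcore, Finset.sum_pair huw] at hrich
  have := M.degree_le u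
  have := M.degree_le v
  have := M.degree_le w
  exact ⟨w, ⟨huw, hcore, Finset.card_pos.1 hleaves, by omega, by omega⟩, by omega⟩

theorem two_le_card_leaves (M : MinimalCounterexample G Δ) (hv : G.degree v = Δ)
    (hcard : #(coreNeighbors G v) ≤ 7) : 2 ≤ #(leaves G v) := by
  have := card_leaves_add_card_coreNeighbors (G := G) v
  have := M.nine_le
  omega

theorem three_le_card_coreNeighbors (M : MinimalCounterexample G Δ) (ha : a ∈ coreNeighbors G v)
    (ha2 : G.degree a ≠ 2) (hv : 2 ≤ G.degree v) (hvΔ : G.degree v ≠ Δ) :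
    3 ≤ #(coreNeighbors G a) := by
  obtain ⟨hva, ha'⟩ := mem_coreNeighbors.1 ha
  have := M.two_le_card_coreNeighbors ha'
  by_contra! hlt
  obtain ⟨_, F, -⟩ := M.exists_fat (u := v) (by omega) (by omega)
    (mem_coreNeighbors.2 ⟨hva.symm, hv⟩)
  exact hvΔ F.degree_left

theorem three_le_card_coreNeighbors_of_light (M : MinimalCounterexample G Δ) (hL : Light G a u) :
    3 ≤ #(coreNeighbors G u) := by
  by_contra! hlt
  have hrich := (M.rich_of_light hL).le_card_leaves_add_sum
  have hsum := (M.sum_degree_coreNeighbors_le u).trans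
    (Nat.mul_le_mul_right Δ (Nat.le_of_lt_succ hlt))
  have := M.card_leaves_le_one hL
  have := M.nine_le
  omega

theorem exists_fat_of_needy (M : MinimalCounterexample G Δ) (hv : Needy G v)
    (hu : u ∈ coreNeighbors G v) : ∃ w, Fat G Δ v u w ∧ 2 ≤ #(leaves G w) := by
  obtain ⟨w, F, -⟩ := M.exists_fat hv.card_coreNeighbors hv.three_le_degree hu
  exact ⟨w, F, M.two_le_card_leaves F.degree_right (hv.card_le_seven w F.symm.adj_left)⟩

theorem three_le_card_coreNeighbors_of_needy (M : MinimalCounterexample G Δ) (hv : Needy G v)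
    (ha : a ∈ coreNeighbors G v) : 3 ≤ #(coreNeighbors G a) := by
  obtain ⟨hva, ha2⟩ := mem_coreNeighbors.1 ha
  have := M.two_le_card_coreNeighbors ha2
  by_contra! hlt
  have := M.nine_le
  have := hv.three_le_degree
  obtain ⟨w, F, hw⟩ := M.exists_fat_of_needy hv ha
  obtain ⟨y, F', -⟩ := M.exists_fat (u := v) (by omega) (F.degree_left.trans_ge (by omega))
    (mem_coreNeighbors.2 ⟨hva.symm, by omega⟩)
  obtain ⟨x, hx, q, hq, hxq⟩ := Finset.one_lt_card.1
    (M.two_le_card_leaves F.degree_left (by omega))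
  obtain ⟨hax, hx1⟩ := mem_leaves.1 hx
  refine M.coreNeighbors_not_subset F (Finset.card_pos.1 (by omega)) hax ?_ (by omega)
    (mem_coreNeighbors.2 ⟨F'.symm.adj_left, F'.symm.two_le_degree_left⟩) F'.ne hq hxq.symm
    (.inl hx1) ?_
  · rintro rfl
    omega
  · rw [F'.coreNeighbors_eq]
    grind

end MinimalCounterexample

/-- The charge, in thirds, that `u` sends to its neighbor `v`. -/
noncomputable def sent (G : SimpleGraph V) (u v : V) : ℕ :=
  if 8 ≤ #(coreNeighbors G u) then 2
  else if #(coreNeighbors G u) ≤ 2 then 0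
  else if Light G v u then 4 - G.degree v
  else if G.degree v = 2 ∨ Needy G v then 1
  else 0

theorem sent_of_eight_le (hu : 8 ≤ #(coreNeighbors G u)) : sent G u v = 2 := if_pos hu

theorem sent_of_le_two (hu : #(coreNeighbors G u) ≤ 2) : sent G u v = 0 := by
  rw [sent, if_neg (by omega), if_pos hu]

theorem one_le_sent (hu : 3 ≤ #(coreNeighbors G u))
    (hv : Light G v u ∨ G.degree v = 2 ∨ Needy G v) : 1 ≤ sent G u v := by
  have (hL : Light G v u) := hL.le_three
  grind [sent]

theorem sent_eq_two_of_light (hu : 3 ≤ #(coreNeighbors G u)) (hL : Light G v u)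
    (hv : G.degree v = 2) : sent G u v = 2 := by
  grind [sent]

theorem sent_cases (hu : #(coreNeighbors G u) ≤ 7) :
    Light G v u ∧ sent G u v + G.degree v = 4 ∨
      sent G u v = 1 ∧ (G.degree v = 2 ∨ Needy G v) ∨ sent G u v = 0 := by
  have (hL : Light G v u) := hL.le_three
  grind [sent]

/-- After discharging, `v` has charge at least `8 / 3`, where its initial charge is the number of
its core neighbors. Everything is counted in thirds. -/
def Satisfied (G : SimpleGraph V) (v : V) : Prop :=
  8 + ∑ u ∈ coreNeighbors G v, sent G v u ≤
    3 * #(coreNeighbors G v) + ∑ u ∈ coreNeighbors G v, sent G u v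

theorem sent_le_received (hu : u ∈ coreNeighbors G v) :
    sent G u v ≤ ∑ u ∈ coreNeighbors G v, sent G u v :=
  Finset.single_le_sum (f := fun u => sent G u v) (fun _ _ => Nat.zero_le _) hu

theorem satisfied_of_eight_le (h : 8 ≤ #(coreNeighbors G v)) : Satisfied G v := by
  rw [Satisfied, Finset.sum_congr rfl fun u _ => sent_of_eight_le h, Finset.sum_const, smul_eq_mul]
  omega

theorem satisfied_of_card_eq_two (hcard : #(coreNeighbors G v) = 2)
    (h : 2 ≤ ∑ u ∈ coreNeighbors G v, sent G u v) : Satisfied G v := by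
  rw [Satisfied, Finset.sum_congr rfl fun u _ => sent_of_le_two hcard.le, Finset.sum_const_zero]
  omega

theorem satisfied_of_forall_one_le_sent (hcard : #(coreNeighbors G v) = 2)
    (h : ∀ a ∈ coreNeighbors G v, 1 ≤ sent G a v) : Satisfied G v :=
  satisfied_of_card_eq_two hcard <| by
    simpa only [hcard, smul_eq_mul, mul_one] using Finset.card_nsmul_le_sum _ _ 1 h

namespace MinimalCounterexample

theorem satisfied_of_degree_eq_two (M : MinimalCounterexample G Δ) (hv : G.degree v = 2) :
    Satisfied G v := by
  have hcard : #(coreNeighbors G v) = 2 := by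
    have := M.two_le_card_coreNeighbors hv.ge
    have := card_leaves_add_card_coreNeighbors (G := G) v
    omega
  have := M.nine_le
  by_cases hex : ∃ a ∈ coreNeighbors G v, G.degree a = 2
  · obtain ⟨a, ha, ha2⟩ := hex
    have hmem : a ∈ G.neighborFinset v := by simpa using (mem_coreNeighbors.1 ha).1
    obtain ⟨b, hb⟩ : ∃ b, (G.neighborFinset v).erase a = {b} := Finset.card_eq_one.1 <| by
      rw [Finset.card_erase_of_mem hmem, G.card_neighborFinset_eq_degree, hv]
    have hN : G.neighborFinset v = {a, b} := by rw [← hb, Finset.insert_erase hmem]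
    have hvb : G.Adj v b := by simp [← G.mem_neighborFinset, hN]
    have hL : Light G v b := ⟨hvb, hv.ge, by omega, fun c hvc hcb => by
      rw [← G.mem_neighborFinset, hN] at hvc
      grind⟩
    have hb' : b ∈ coreNeighbors G v :=
      (mem_leaves_or_mem_coreNeighbors hvb).resolve_left fun hb => by
        have := card_leaves_add_card_coreNeighbors (G := G) v
        have := Finset.card_pos.2 ⟨b, hb⟩
        omega
    refine satisfied_of_card_eq_two hcard ?_
    rw [← sent_eq_two_of_light (M.three_le_card_coreNeighbors_of_light hL) hL hv]
    exact sent_le_received hb'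
  · push Not at hex
    exact satisfied_of_forall_one_le_sent hcard fun a ha => one_le_sent
      (M.three_le_card_coreNeighbors ha (hex a ha) hv.ge (by omega)) (.inr (.inl hv))

theorem satisfied_of_needy (M : MinimalCounterexample G Δ) (hv : Needy G v) : Satisfied G v :=
  satisfied_of_forall_one_le_sent hv.card_coreNeighbors fun _ ha =>
    one_le_sent (M.three_le_card_coreNeighbors_of_needy hv ha) (.inr (.inr hv))

theorem satisfied_of_card_coreNeighbors_eq_two (M : MinimalCounterexample G Δ)
    (hcard : #(coreNeighbors G v) = 2) : Satisfied G v := by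
  have := card_leaves_add_card_coreNeighbors (G := G) v
  by_cases hv2 : G.degree v = 2
  · exact M.satisfied_of_degree_eq_two hv2
  by_cases hneedy : Needy G v
  · exact M.satisfied_of_needy hneedy
  obtain ⟨w, hvw, hw⟩ : ∃ w, G.Adj v w ∧ 7 < #(coreNeighbors G w) := by
    by_contra! h
    exact hneedy ⟨hcard, by omega, h⟩
  have hdeg := card_leaves_add_card_coreNeighbors (G := G) w
  refine satisfied_of_card_eq_two hcard ?_
  rw [← sent_of_eight_le (v := v) hw]
  exact sent_le_received (mem_coreNeighbors.2 ⟨hvw, by omega⟩)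

end MinimalCounterexample

theorem satisfied_of_sent_le_one (hcard : 3 ≤ #(coreNeighbors G v))
    (hle : ∀ u ∈ coreNeighbors G v, sent G v u ≤ 1)
    (h : ∀ ⦃a b c⦄, a ≠ b → a ≠ c → b ≠ c → coreNeighbors G v = {a, b, c} → sent G v a = 1 →
      sent G v b = 1 → sent G v c + 1 ≤ sent G c v) : Satisfied G v := by
  have hsum : ∑ u ∈ coreNeighbors G v, sent G v u = #{u ∈ coreNeighbors G v | sent G v u = 1} := by
    rw [Finset.card_filter]
    exact Finset.sum_congr rfl fun u hu => by grind
  have hfilter := Finset.card_filter_le (coreNeighbors G v) fun u => sent G v u = 1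
  rw [Satisfied]
  by_cases hout : 3 * #(coreNeighbors G v) < 8 + #{u ∈ coreNeighbors G v | sent G v u = 1}
  · obtain ⟨a, b, c, hab, hac, hbc, hcore, ha, hb⟩ :=
      exists_eq_triple (s := coreNeighbors G v) (p := fun u => sent G v u = 1) (by omega) (by omega)
    have hc := h hab hac hbc hcore ha hb
    have hreceived := sent_le_received (show c ∈ coreNeighbors G v by simp [hcore])
    have hsum' : ∑ u ∈ coreNeighbors G v, sent G v u = 2 + sent G v c := by
      rw [hcore, Finset.sum_insert (by simp [hab, hac]), Finset.sum_pair hbc, ha, hb]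
      omega
    omega
  · omega

namespace MinimalCounterexample

theorem degree_eq_of_needy (M : MinimalCounterexample G Δ) (hv : Needy G v)
    (hu : u ∈ coreNeighbors G v) : G.degree u = Δ := by
  obtain ⟨w, F, -⟩ := M.exists_fat_of_needy hv hu
  exact F.degree_left

theorem satisfied_of_card_leaves_le_one (M : MinimalCounterexample G Δ)
    (hcard : 3 ≤ #(coreNeighbors G v)) (hcard' : #(coreNeighbors G v) ≤ 7) (hrich : Rich G Δ v)
    (hleaves : #(leaves G v) ≤ 1) : Satisfied G v := by
  have hΔ := M.nine_le
  have hdeg := card_leaves_add_card_coreNeighbors (G := G) v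
  have hrich := hrich.le_card_leaves_add_sum
  have hterm : ∀ u ∈ coreNeighbors G v, Δ * sent G v u + 3 * G.degree u ≤ 3 * Δ := fun u hu => by
    have hdu := M.degree_le u
    obtain ⟨hvu, hu2⟩ := mem_coreNeighbors.1 hu
    rcases sent_cases (v := u) hcard' with ⟨hL, h⟩ | ⟨h, h2 | hneedy⟩ | h
    · obtain h | h : sent G v u = 2 ∧ G.degree u = 2 ∨ sent G v u ≤ 1 ∧ G.degree u ≤ 3 := by
        have := hL.le_three
        omega
      all_goals nlinarith
    · rw [h]
      omega
    · have := M.degree_eq_of_needy hneedy (mem_coreNeighbors.2 ⟨hvu.symm, by omega⟩)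
      omega
    · rw [h]
      omega
  have hsum := Finset.sum_le_card_nsmul _ _ _ hterm
  rw [Finset.sum_add_distrib, ← Finset.mul_sum, ← Finset.mul_sum, smul_eq_mul] at hsum
  suffices 8 + ∑ u ∈ coreNeighbors G v, sent G v u ≤ 3 * #(coreNeighbors G v) from
    this.trans (Nat.le_add_right _ _)
  by_contra! hlt
  have : Δ * (3 * #(coreNeighbors G v)) ≤ Δ * (7 + ∑ u ∈ coreNeighbors G v, sent G v u) :=
    Nat.mul_le_mul_left Δ (by omega)
  have : 9 * Δ ≤ 3 * ∑ u ∈ coreNeighbors G v, G.degree u + 9 := by omega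
  nlinarith

theorem sent_eq_zero_or_one (M : MinimalCounterexample G Δ) (hcard : #(coreNeighbors G v) ≤ 7)
    (h : Rich G Δ v → 2 ≤ #(leaves G v)) (u : V) :
    sent G v u = 0 ∨ sent G v u = 1 ∧ (G.degree u = 2 ∨ Needy G u) := by
  rcases sent_cases (v := u) hcard with ⟨hL, -⟩ | h1 | h0
  · have := h (M.rich_of_light hL)
    have := M.card_leaves_le_one hL
    omega
  · exact .inr h1
  · exact .inl h0

theorem satisfied_of_not_rich (M : MinimalCounterexample G Δ)
    (hcard : 3 ≤ #(coreNeighbors G v)) (hcard' : #(coreNeighbors G v) ≤ 7)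
    (hrich : ¬ Rich G Δ v) : Satisfied G v := by
  have hΔ := M.nine_le
  have hdeg := card_leaves_add_card_coreNeighbors (G := G) v
  have hleaves : #(leaves G v) = 0 := by
    by_contra h
    exact hrich (M.rich_of_card_leaves_pos (by omega))
  have hsent (u) (hu : u ∈ coreNeighbors G v) :
      sent G v u = 0 ∨ sent G v u = 1 ∧ G.degree u = 2 := by
    refine (M.sent_eq_zero_or_one hcard' (absurd · hrich) u).imp_right fun ⟨h1, h⟩ =>
      ⟨h1, h.resolve_right fun hneedy => ?_⟩
    have := M.degree_eq_of_needy hneedy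
      (mem_coreNeighbors.2 ⟨(mem_coreNeighbors.1 hu).1.symm, by omega⟩)
    omega
  refine satisfied_of_sent_le_one hcard (fun u hu => by have := hsent u hu; omega)
    fun a b c hab hac hbc hcore ha hb => ?_
  simp only [hcore, Finset.mem_insert, Finset.mem_singleton, forall_eq_or_imp, forall_eq] at hsent
  obtain ⟨ha2, hb2, hc⟩ := hsent
  have hc' : c ∈ coreNeighbors G v := by simp [hcore]
  have hv3 : G.degree v = 3 := by
    rw [← hdeg, hleaves, hcore, Finset.card_eq_three.2 ⟨a, b, c, hab, hac, hbc, rfl⟩]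
  have hlight (x) (hx : x ∈ coreNeighbors G v)
      (h : ∀ y ∈ coreNeighbors G v, y ≠ x → G.degree y = 2) : Light G v x :=
    ⟨(mem_coreNeighbors.1 hx).1, by omega, by omega, fun y hvy => h y <|
      (mem_leaves_or_mem_coreNeighbors hvy).resolve_left (by simp [Finset.card_eq_zero.1 hleaves])⟩
  have hc2 : G.degree c ≠ 2 := fun hc2 => by
    have := M.three_le_card_coreNeighbors_of_light
      (hlight a (by simp [hcore]) (by rw [hcore]; grind))
    have := card_leaves_add_card_coreNeighbors (G := G) a
    omega
  rw [hc.resolve_right fun h => hc2 h.2]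
  exact one_le_sent (M.three_le_card_coreNeighbors hc' hc2 (by omega) (by omega))
    (.inl (hlight c hc' (by rw [hcore]; grind)))

theorem eight_le_of_needy_of_degree_eq_two (M : MinimalCounterexample G Δ) (hac : a ≠ c)
    (hcore : coreNeighbors G v = {a, b, c}) (hleaves : (leaves G v).Nonempty)
    (ha : Needy G a) (hb : G.degree b = 2) : 8 ≤ #(coreNeighbors G c) := by
  by_contra! hc8
  have ha' : a ∈ coreNeighbors G v := by simp [hcore]
  have hb' : b ∈ coreNeighbors G v := by simp [hcore]
  have hv : 2 ≤ G.degree v := by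
    rw [← card_leaves_add_card_coreNeighbors, hcore]
    have := Finset.card_pos.2 hleaves
    have := Finset.card_pos.2 ⟨a, Finset.mem_insert_self a {b, c}⟩
    omega
  obtain ⟨w, F, hw⟩ := M.exists_fat_of_needy ha
    (mem_coreNeighbors.2 ⟨(mem_coreNeighbors.1 ha').1.symm, hv⟩)
  obtain ⟨q, hq⟩ := hleaves
  have hqb : q ≠ b := by
    rintro rfl
    have := (mem_leaves.1 hq).2
    omega
  have hab : a ≠ b := by
    rintro rfl
    have := ha.three_le_degree
    omega
  refine M.coreNeighbors_not_subset F (Finset.card_pos.1 (by omega)) (mem_coreNeighbors.1 hb').1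
    hab hb.le (by simp [hcore]) hac hq hqb ?_ hcore.subset
  rcases (M.degree_le c).lt_or_eq with hlt | heq
  · exact .inr (.inl hlt)
  · have := M.two_le_card_leaves heq (by omega)
    exact .inr (.inr (Finset.card_pos.1 (by omega)))

theorem eight_le_of_needy_of_needy (M : MinimalCounterexample G Δ) (hab : a ≠ b) (hac : a ≠ c)
    (hbc : b ≠ c) (hcore : coreNeighbors G v = {a, b, c}) (hleaves : 2 ≤ #(leaves G v))
    (ha : Needy G a) (hb : Needy G b) : 8 ≤ #(coreNeighbors G c) := by
  have hv : 2 ≤ G.degree v := by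
    have := card_leaves_add_card_coreNeighbors (G := G) v
    omega
  have hmem {x} (hx : x ∈ coreNeighbors G v) : v ∈ coreNeighbors G x :=
    mem_coreNeighbors.2 ⟨(mem_coreNeighbors.1 hx).1.symm, hv⟩
  obtain ⟨w, F, hw⟩ := M.exists_fat_of_needy ha (hmem (by simp [hcore]))
  obtain ⟨z, F', hz⟩ := M.exists_fat_of_needy hb (hmem (by simp [hcore]))
  exact absurd hcore.subset <| M.coreNeighbors_not_subset_of_fat F F' hab (by simp [hcore])
    hac.symm hbc.symm hleaves hw hz

theorem eight_le_card_coreNeighbors (M : MinimalCounterexample G Δ) (hab : a ≠ b) (hac : a ≠ c)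
    (hbc : b ≠ c) (hcore : coreNeighbors G v = {a, b, c}) (hleaves : 2 ≤ #(leaves G v))
    (ha : G.degree a = 2 ∨ Needy G a) (hb : G.degree b = 2 ∨ Needy G b) :
    8 ≤ #(coreNeighbors G c) := by
  have hleaves' : (leaves G v).Nonempty := Finset.card_pos.1 (by omega)
  rcases ha with ha | ha <;> rcases hb with hb | hb
  · have hrich := (M.rich_of_card_leaves_pos (v := v) (by omega)).le_card_leaves_add_sum
    have hdeg := card_leaves_add_card_coreNeighbors (G := G) v
    rw [hcore, Finset.sum_insert (by simp [hab, hac]), Finset.sum_pair hbc] at hrich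
    rw [hcore, Finset.card_eq_three.2 ⟨a, b, c, hab, hac, hbc, rfl⟩] at hdeg
    have := M.nine_le
    have := M.degree_le c
    have := M.degree_le v
    omega
  · exact M.eight_le_of_needy_of_degree_eq_two hbc (hcore.trans (Finset.insert_comm a b {c}))
      hleaves' hb ha
  · exact M.eight_le_of_needy_of_degree_eq_two hac hcore hleaves' ha hb
  · exact M.eight_le_of_needy_of_needy hab hac hbc hcore hleaves ha hb

theorem satisfied_of_two_le_card_leaves (M : MinimalCounterexample G Δ)
    (hcard : 3 ≤ #(coreNeighbors G v)) (hcard' : #(coreNeighbors G v) ≤ 7)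
    (hleaves : 2 ≤ #(leaves G v)) : Satisfied G v := by
  have hsent := M.sent_eq_zero_or_one hcard' fun _ => hleaves
  refine satisfied_of_sent_le_one hcard (fun u _ => by have := hsent u; omega)
    fun a b c hab hac hbc hcore ha hb => ?_
  have hneeds (u) (hu : sent G v u = 1) : G.degree u = 2 ∨ Needy G u :=
    ((hsent u).resolve_left (by omega)).2
  have := hsent c
  rw [sent_of_eight_le (M.eight_le_card_coreNeighbors hab hac hbc hcore hleaves
    (hneeds a ha) (hneeds b hb))]
  omega

theorem satisfied (M : MinimalCounterexample G Δ) (hv : 2 ≤ G.degree v) : Satisfied G v := by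
  have := M.two_le_card_coreNeighbors hv
  by_cases h2 : #(coreNeighbors G v) = 2
  · exact M.satisfied_of_card_coreNeighbors_eq_two h2
  by_cases h8 : 8 ≤ #(coreNeighbors G v)
  · exact satisfied_of_eight_le h8
  by_cases hrich : Rich G Δ v
  · rcases le_or_gt #(leaves G v) 1 with hleaves | hleaves
    · exact M.satisfied_of_card_leaves_le_one (by omega) (by omega) hrich hleaves
    · exact M.satisfied_of_two_le_card_leaves (by omega) (by omega) hleaves
  · exact M.satisfied_of_not_rich (by omega) (by omega) hrich

end MinimalCounterexample

end Discharging

section Mad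

variable {V : Type*} [Finite V] {G H : SimpleGraph V} {A : Finset V}

theorem le_mad (hA : A.Nonempty) :
    2 * ({e ∈ G.edgeSet | ∀ v ∈ e, v ∈ A}.ncard : ℝ) / (#A : ℝ) ≤ mad G := by
  refine le_csSup (Set.Finite.bddAbove ?_) ⟨A, hA, rfl⟩
  refine (Set.finite_range fun A : Finset V =>
    2 * ({e ∈ G.edgeSet | ∀ v ∈ e, v ∈ A}.ncard : ℝ) / (#A : ℝ)).subset ?_
  rintro x ⟨A, -, rfl⟩
  exact ⟨A, rfl⟩

theorem mad_mono (h : H ≤ G) : mad H ≤ mad G := by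
  refine Real.sSup_le ?_ (Real.sSup_nonneg ?_)
  · rintro x ⟨A, hA, rfl⟩
    refine le_trans ?_ (le_mad hA)
    gcongr
    exact Set.toFinite _
  · rintro x ⟨A, -, rfl⟩
    positivity

end Mad

section Density

variable {V : Type*} [Fintype V] {G : SimpleGraph V} {Δ : ℕ}

theorem sum_card_filter_adj (G : SimpleGraph V) (A : Finset V) :
    ∑ v ∈ A, #{w ∈ G.neighborFinset v | w ∈ A} = 2 * {e ∈ G.edgeSet | ∀ v ∈ e, v ∈ A}.ncard := by
  set H := ((⊤ : G.Subgraph).induce A).spanningCoe with hH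
  have hadj {v w} : H.Adj v w ↔ v ∈ A ∧ w ∈ A ∧ G.Adj v w := by simp [hH]
  have hedge : {e ∈ G.edgeSet | ∀ v ∈ e, v ∈ A} = H.edgeFinset := by
    ext e
    induction e with | _ a b
    simp [hadj, and_assoc, and_comm]
  rw [hedge, Set.ncard_coe_finset, ← H.sum_degrees_eq_twice_card_edges,
    ← Finset.sum_subset (Finset.subset_univ A)]
  · refine Finset.sum_congr rfl fun v hv => ?_
    rw [← H.card_neighborFinset_eq_degree]
    congr 1
    ext w
    simp [hadj, hv, and_comm]
  · intro v _ hv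
    rw [← H.card_neighborFinset_eq_degree, Finset.card_eq_zero]
    ext w
    simp [hadj, hv]

/-- The vertices of degree at least two. -/
noncomputable def core (G : SimpleGraph V) : Finset V := {v | 2 ≤ G.degree v}

theorem mem_core {v : V} : v ∈ core G ↔ 2 ≤ G.degree v := by
  simp only [core, Finset.mem_filter_univ]

theorem coreNeighbors_eq_filter (G : SimpleGraph V) (v : V) :
    coreNeighbors G v = {w ∈ G.neighborFinset v | w ∈ core G} := by
  simp only [coreNeighbors, mem_core]

theorem sum_sent_comm (G : SimpleGraph V) :
    ∑ v ∈ core G, ∑ u ∈ coreNeighbors G v, sent G v u =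
      ∑ v ∈ core G, ∑ u ∈ coreNeighbors G v, sent G u v :=
  Finset.sum_comm' fun v u => by
    simp only [mem_core, mem_coreNeighbors, G.adj_comm v u]
    tauto

namespace MinimalCounterexample

theorem core_nonempty (M : MinimalCounterexample G Δ) : (core G).Nonempty := by
  by_contra! hcore
  have hdeg (v) : G.degree v ≤ 1 := by
    by_contra! hv
    exact Finset.notMem_empty v (hcore ▸ mem_core.2 hv)
  have hΔ := M.nine_le
  refine M.not_hasStrongColoring ⟨fun _ => ⟨0, by omega⟩, fun e he => ?_⟩
  induction e with | _ a b
  have hab : G.Adj a b := he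
  have hrich : Rich G Δ a := M.rich_of_mem_leaves (q := b) <| mem_leaves.2
    ⟨hab, (hdeg b).antisymm ((G.degree_pos_iff_exists_adj b).2 ⟨a, hab.symm⟩)⟩
  have hsum := Finset.sum_le_card_nsmul _ _ _ fun w (_ : w ∈ G.neighborFinset a) => hdeg w
  rw [G.card_neighborFinset_eq_degree, smul_eq_mul] at hsum
  have := hdeg a
  rw [Rich] at hrich
  omega

theorem eight_mul_card_core_le (M : MinimalCounterexample G Δ) :
    8 * #(core G) ≤ 3 * ∑ v ∈ core G, #(coreNeighbors G v) := by
  have h := Finset.sum_le_sum fun v (hv : v ∈ core G) => M.satisfied (mem_core.1 hv)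
  rw [Finset.sum_add_distrib, Finset.sum_add_distrib, sum_sent_comm, ← Finset.mul_sum,
    Finset.sum_const, smul_eq_mul] at h
  omega

theorem eight_thirds_le_mad (M : MinimalCounterexample G Δ) : 8 / 3 ≤ mad G := by
  refine le_trans ?_ (le_mad M.core_nonempty)
  have h := M.eight_mul_card_core_le
  simp only [coreNeighbors_eq_filter, sum_card_filter_adj] at h
  have hpos : (0 : ℝ) < #(core G) := mod_cast M.core_nonempty.card_pos
  rw [div_le_div_iff₀ three_pos hpos]
  norm_cast
  omega

end MinimalCounterexample

theorem exists_minimalCounterexample (hΔ : 9 ≤ Δ) (hdeg : ∀ v, G.degree v ≤ Δ)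
    (hG : ¬ HasStrongColoring G (3 * Δ - 3)) : ∃ H ≤ G, MinimalCounterexample H Δ := by
  obtain ⟨H, hHG, hH⟩ := exists_minimal_le_of_wellFoundedLT
    (fun H : SimpleGraph V => ¬ HasStrongColoring H (3 * Δ - 3)) G hG
  refine ⟨H, hHG, hΔ, fun v => (SimpleGraph.degree_le_of_le hHG).trans (hdeg v), hH.prop, ?_⟩
  intro K hK
  by_contra hK'
  exact hH.not_prop_of_lt hK hK'

end Density

/-- If `Δ ≥ 9` and `G` has maximum average degree less than `8/3` and maximum degree at
most `Δ`, then `χ'_s(G) ≤ 3Δ - 3`. -/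
theorem strong_chromatic_index_mad_lt_eight_thirds {V : Type*} [Fintype V] (Δ : ℕ)
    (hΔ : 9 ≤ Δ) (G : SimpleGraph V) (hmad : mad G < 8 / 3) (hdeg : G.maxDegree ≤ Δ) :
    strongChromaticIndex G ≤ 3 * Δ - 3 := by
  refine Nat.sInf_le ?_
  by_contra hG
  obtain ⟨H, hHG, M⟩ :=
    exists_minimalCounterexample hΔ (fun v => (G.degree_le_maxDegree v).trans hdeg) hG
  exact (M.eight_thirds_le_mad.trans (mad_mono hHG)).not_gt hmad

end StrongEC
end
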